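/- arXiv:gr-qc/0609074 — 3 statements merged into one kernel-verified Lean document; each statement's English description precedes it below -/
import Mathlib

section
/- Suppose there exists η̂ > 0 such that σ'(η) ≥ 1/(4+2l) + ((7+4l)/(4+2l))·σ(η) for all 0 < η ≤ η̂. Then every solution of the static Einstein–Vlasov equations has finite radius and finite mass: if (m,η) is a solution whose maximal interval of definition (with η > 0 and 0 < 2m(r) < r) is (r₁,R), then R < ∞ and sup_{r₁<r<R} m(r) < ∞. -/
open Filter Set MeasureTheory

/-- The kinetic integrals `g_i(η) = ∫_{e^{-η}}^1 φ(ℰ) [(ℰ² - e^{-2η})/2]^i dℰ`. -/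
noncomputable def gfun (φ : ℝ → ℝ) (i η : ℝ) : ℝ :=
  ∫ E in Real.exp (-η)..1, φ E * (((E ^ 2 - Real.exp (-2 * η)) / 2) ^ i)

/-- The constant `a = 2^{l+3/2} π^{3/2} Γ(l+1) / ((l+3/2) Γ(l+3/2))`. -/
noncomputable def acoef (l : ℝ) : ℝ :=
  (2 : ℝ) ^ (l + 3 / 2) * Real.pi ^ ((3 : ℝ) / 2) * Real.Gamma (l + 1) /
    ((l + 3 / 2) * Real.Gamma (l + 3 / 2))

/-- The radial pressure `p_rad(r,η) = a r^{2l} e^{(2l+4)η} g_{l+3/2}(η)`. -/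
noncomputable def pRad (φ : ℝ → ℝ) (l r η : ℝ) : ℝ :=
  acoef l * r ^ (2 * l) * Real.exp ((2 * l + 4) * η) * gfun φ (l + 3 / 2) η

/-- The energy density `ρ(r,η) = (l+3/2) a r^{2l} e^{(2l+4)η} [2g_{l+3/2}(η) + e^{-2η} g_{l+1/2}(η)]`. -/
noncomputable def rhoFun (φ : ℝ → ℝ) (l r η : ℝ) : ℝ :=
  (l + 3 / 2) * acoef l * r ^ (2 * l) * Real.exp ((2 * l + 4) * η) *
    (2 * gfun φ (l + 3 / 2) η + Real.exp (-2 * η) * gfun φ (l + 1 / 2) η)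

/-- `σ(η) = p_rad/ρ = (1/(3+2l)) g_{l+3/2}/(g_{l+3/2} + (1/2)e^{-2η} g_{l+1/2})`. -/
noncomputable def sigmaFun (φ : ℝ → ℝ) (l η : ℝ) : ℝ :=
  (1 / (3 + 2 * l)) * gfun φ (l + 3 / 2) η /
    (gfun φ (l + 3 / 2) η + (1 / 2) * Real.exp (-2 * η) * gfun φ (l + 1 / 2) η)

/-- A solution of the static Einstein–Vlasov equations on the interval
`{r | r₁ < r ∧ r < R}` (`R` possibly `∞`): a pair of `C¹` functions `m, η` with
`η > 0`, `0 < 2m < r`, satisfying `r m' = 4π r³ ρ` and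
`r η' = -(1 - 2m/r)⁻¹ (m/r + 4π r² p_rad)`. -/
def IsEVSolution (φ : ℝ → ℝ) (l : ℝ) (m ηf : ℝ → ℝ) (r₁ : ℝ) (R : EReal) : Prop :=
  ∀ r : ℝ, r₁ < r → (r : EReal) < R →
    0 < ηf r ∧ 0 < m r ∧ 2 * m r < r ∧
    HasDerivAt m (4 * Real.pi * r ^ 2 * rhoFun φ l r (ηf r)) r ∧
    HasDerivAt ηf
      (-((1 - 2 * m r / r)⁻¹ * (m r / r + 4 * Real.pi * r ^ 2 * pRad φ l r (ηf r))) / r) r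

/-- the kernel used in the Fubini argument -/
noncomputable def kerf (p E s : ℝ) : ℝ :=
  if Real.exp (-s) < E then p * Real.exp (-2 * s) * ((E ^ 2 - Real.exp (-2 * s)) / 2) ^ (p - 1) else 0

lemma exp_two_eq (s : ℝ) : Real.exp (-2 * s) = Real.exp (-s) ^ 2 := by
  rw [← Real.exp_nat_mul]; congr 1; push_cast; ring

lemma ker_int {p η E : ℝ} (hp : 0 < p) (hE : E ∈ Ioo (Real.exp (-η)) 1) :
    IntegrableOn (kerf p E) (Ioc 0 η) ∧
      ∫ s in Ioc 0 η, kerf p E s = ((E ^ 2 - Real.exp (-2 * η)) / 2) ^ p := by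
  have hE0 : 0 < E := (Real.exp_pos _).trans hE.1
  set s0 := -Real.log E with hs0
  have hexp : Real.exp (-s0) = E := by rw [hs0, neg_neg, Real.exp_log hE0]
  have hs0pos : 0 < s0 := by
    have := Real.log_neg hE0 hE.2
    linarith
  have hs0η : s0 < η := by
    have : Real.exp (-η) < Real.exp (-s0) := by rw [hexp]; exact hE.1
    have := Real.exp_lt_exp.1 this
    linarith
  have hiff : ∀ s, Real.exp (-s) < E ↔ s0 < s := by
    intro s
    rw [← hexp, Real.exp_lt_exp]
    constructor <;> intro h <;> linarith
  set F : ℝ → ℝ := fun s => ((E ^ 2 - Real.exp (-2 * s)) / 2) ^ p with hF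
  set F' : ℝ → ℝ := fun s => p * Real.exp (-2 * s) * ((E ^ 2 - Real.exp (-2 * s)) / 2) ^ (p - 1) with hF'
  have hcont : ContinuousOn F (Icc s0 η) := by
    have : Continuous F := by
      apply Continuous.rpow_const
      · fun_prop
      · intro x; right; exact hp.le
    exact this.continuousOn
  have hbpos : ∀ s, s0 < s → 0 < (E ^ 2 - Real.exp (-2 * s)) / 2 := by
    intro s hs
    have h1 := (hiff s).2 hs
    rw [exp_two_eq]
    have h2 := Real.exp_pos (-s)
    nlinarith
  have hder : ∀ x ∈ Ioo s0 η, HasDerivAt F (F' x) x := by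
    intro x hx
    have h1 : HasDerivAt (fun s => (E ^ 2 - Real.exp (-2 * s)) / 2) (Real.exp (-2 * x)) x := by
      have h2 : HasDerivAt (fun s : ℝ => -2 * s) (-2) x := by
        simpa using (hasDerivAt_id x).const_mul (-2 : ℝ)
      have h3 := ((h2.exp).const_sub (E ^ 2)).div_const 2
      exact h3.congr_deriv (by ring)
    have h4 := h1.rpow_const (p := p) (Or.inl (hbpos x hx.1).ne')
    exact h4.congr_deriv (by simp only [hF']; ring)
  have hnn : ∀ x ∈ Ioo s0 η, 0 ≤ F' x := by
    intro x hx
    have := hbpos x hx.1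
    simp only [hF']; positivity
  have hint := intervalIntegral.integrableOn_deriv_of_nonneg hcont hder hnn
  have hk : kerf p E = (Ioi s0).indicator F' := by
    funext s
    simp only [kerf, Set.indicator, mem_Ioi, hiff, hF']
  have hinter : Ioc 0 η ∩ Ioi s0 = Ioc s0 η := by
    ext x; simp only [mem_inter_iff, mem_Ioc, mem_Ioi]
    constructor
    · rintro ⟨⟨a, b⟩, c⟩; exact ⟨c, b⟩
    · rintro ⟨a, b⟩; exact ⟨⟨hs0pos.trans a, b⟩, a⟩
  constructor
  · rw [hk, IntegrableOn, integrable_indicator_iff measurableSet_Ioi, IntegrableOn,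
      Measure.restrict_restrict measurableSet_Ioi, inter_comm, hinter]
    exact hint
  · rw [hk, setIntegral_indicator measurableSet_Ioi, hinter, ← intervalIntegral.integral_of_le hs0η.le,
      intervalIntegral.integral_eq_sub_of_hasDerivAt_of_le hs0η.le hcont hder
        ((intervalIntegrable_iff_integrableOn_Ioc_of_le hs0η.le).2 hint)]
    have : F s0 = 0 := by
      simp only [hF]
      rw [exp_two_eq, hexp, sub_self, zero_div, Real.zero_rpow hp.ne']
    rw [this, sub_zero]

lemma phi_int (φ : ℝ → ℝ)
    (hφcont : ContinuousOn φ (Ioo 0 1))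
    (hφnonneg : ∀ x ∈ Ioo (0:ℝ) 1, 0 ≤ φ x)
    (hφbound : ∃ C > (0:ℝ), ∃ ε > (0:ℝ), ∃ δ ∈ Ioo (0:ℝ) 1,
      ∀ x ∈ Ioo (1 - δ) 1, φ x ≤ C * (1 - x) ^ (-1 + ε)) (c : ℝ) (hc : 0 < c) :
    IntegrableOn φ (Ioo c 1) := by
  obtain ⟨C, hC, ε, hε, δ, hδ, hb⟩ := hφbound
  have h1 : IntegrableOn φ (Icc c (1 - δ / 2)) := by
    apply ContinuousOn.integrableOn_Icc
    apply hφcont.mono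
    intro x hx
    exact ⟨hc.trans_le hx.1, by linarith [hx.2, hδ.1]⟩
  have h2 : IntegrableOn φ (Ioo (1 - δ) 1) := by
    have hg : IntegrableOn (fun x => C * (1 - x) ^ (-1 + ε)) (Ioo (1 - δ) 1) := by
      apply Integrable.const_mul
      have h3 : IntervalIntegrable (fun x : ℝ => x ^ (-1 + ε)) volume 0 δ :=
        intervalIntegral.intervalIntegrable_rpow' (by linarith)
      have h4 := (h3.comp_sub_left 1).symm
      rw [sub_zero, intervalIntegrable_iff_integrableOn_Ioo_of_le (by linarith [hδ.1])] at h4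
      exact h4
    refine Integrable.mono' hg ?_ ?_
    · apply ContinuousOn.aestronglyMeasurable _ measurableSet_Ioo
      apply hφcont.mono
      intro x hx
      exact ⟨by linarith [hx.1, hδ.2], hx.2⟩
    · refine (ae_restrict_iff' measurableSet_Ioo).2 (Eventually.of_forall fun x hx => ?_)
      rw [Real.norm_of_nonneg (hφnonneg x ⟨by linarith [hx.1, hδ.2], hx.2⟩)]
      exact hb x hx
  apply (h1.union h2).mono_set
  intro x hx
  rcases le_or_gt x (1 - δ / 2) with h | h
  · left; exact ⟨hx.1.le, h⟩
  · right; exact ⟨by linarith [hδ.1], hx.2⟩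

lemma gfun_eq (φ : ℝ → ℝ)
    (hφcont : ContinuousOn φ (Ioo 0 1))
    (hφnonneg : ∀ x ∈ Ioo (0:ℝ) 1, 0 ≤ φ x)
    (hφbound : ∃ C > (0:ℝ), ∃ ε > (0:ℝ), ∃ δ ∈ Ioo (0:ℝ) 1,
      ∀ x ∈ Ioo (1 - δ) 1, φ x ≤ C * (1 - x) ^ (-1 + ε)) (p : ℝ) (hp : 0 < p) (η : ℝ) (hη : 0 < η) :
    IntegrableOn (fun s => p * Real.exp (-2 * s) * gfun φ (p - 1) s) (Ioc 0 η) ∧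
      gfun φ p η = ∫ s in Ioc 0 η, p * Real.exp (-2 * s) * gfun φ (p - 1) s := by
  have hφi := phi_int φ hφcont hφnonneg hφbound (Real.exp (-η)) (Real.exp_pos _)
  set μ := (volume : Measure ℝ).restrict (Ioo (Real.exp (-η)) 1) with hμ
  set ν := (volume : Measure ℝ).restrict (Ioc 0 η) with hν
  have hkm : Measurable (fun z : ℝ × ℝ => kerf p z.1 z.2) := by
    unfold kerf
    refine Measurable.ite (measurableSet_lt (by fun_prop) (by fun_prop)) ?_ measurable_const
    fun_prop
  have hknn : ∀ E s, 0 ≤ kerf p E s := by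
    intro E s
    unfold kerf
    split_ifs with h
    · have := Real.exp_pos (-s)
      have h2 : 0 ≤ (E ^ 2 - Real.exp (-2 * s)) / 2 := by
        rw [exp_two_eq]; nlinarith
      positivity
    · exact le_rfl
  have hsub : ∀ x ∈ Ioo (Real.exp (-η)) 1, x ∈ Ioo (0:ℝ) 1 := fun x hx =>
    ⟨(Real.exp_pos _).trans hx.1, hx.2⟩
  have hmeas : AEStronglyMeasurable (fun z : ℝ × ℝ => φ z.1 * kerf p z.1 z.2) (μ.prod ν) := by
    apply AEStronglyMeasurable.mul
    · exact hφi.aestronglyMeasurable.comp_fst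
    · exact hkm.aestronglyMeasurable
  have hprod : Integrable (fun z : ℝ × ℝ => φ z.1 * kerf p z.1 z.2) (μ.prod ν) := by
    rw [integrable_prod_iff hmeas]
    constructor
    · refine (ae_restrict_iff' measurableSet_Ioo).2 (Eventually.of_forall fun x hx => ?_)
      exact (ker_int hp hx).1.const_mul (φ x)
    · have : Integrable (fun E => φ E * ((E ^ 2 - Real.exp (-2 * η)) / 2) ^ p) μ := by
        refine Integrable.mono' hφi (hφi.aestronglyMeasurable.mul ?_) ?_
        · apply Measurable.aestronglyMeasurable; fun_prop
        · refine (ae_restrict_iff' measurableSet_Ioo).2 (Eventually.of_forall fun x hx => ?_)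
          have h0 := hφnonneg x (hsub x hx)
          have h1 := Real.exp_pos (-η)
          have h2 : 0 ≤ (x ^ 2 - Real.exp (-2 * η)) / 2 := by
            rw [exp_two_eq]; nlinarith [hx.1]
          have h3 : (x ^ 2 - Real.exp (-2 * η)) / 2 ≤ 1 := by
            rw [exp_two_eq]; nlinarith [hx.1, hx.2]
          have h4 := Real.rpow_le_one h2 h3 hp.le
          have h5 := Real.rpow_nonneg h2 p
          rw [Real.norm_of_nonneg (by positivity)]
          nlinarith
      refine this.congr ?_
      refine (ae_restrict_iff' measurableSet_Ioo).2 (Eventually.of_forall fun x hx => ?_)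
      have h0 := hφnonneg x (hsub x hx)
      simp only [norm_mul, Real.norm_of_nonneg h0, Real.norm_of_nonneg (hknn _ _)]
      rw [integral_const_mul, (ker_int hp hx).2]
  have hinner : ∀ s ∈ Ioc 0 η, ∫ E, φ E * kerf p E s ∂μ = p * Real.exp (-2 * s) * gfun φ (p - 1) s := by
    intro s hs
    have hle : Real.exp (-s) ≤ 1 := Real.exp_le_one_iff.2 (by linarith [hs.1])
    rw [gfun, intervalIntegral.integral_of_le hle, integral_Ioc_eq_integral_Ioo,
      ← integral_const_mul]
    have hk : (fun E => φ E * kerf p E s) = (Ioi (Real.exp (-s))).indicator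
        (fun E => p * Real.exp (-2 * s) * (φ E * ((E ^ 2 - Real.exp (-2 * s)) / 2) ^ (p - 1))) := by
      funext E
      simp only [kerf, Set.indicator, mem_Ioi]
      split_ifs <;> ring
    have hinter : Ioo (Real.exp (-η)) 1 ∩ Ioi (Real.exp (-s)) = Ioo (Real.exp (-s)) 1 := by
      have : Real.exp (-η) ≤ Real.exp (-s) := Real.exp_le_exp.2 (by linarith [hs.2])
      ext x; simp only [mem_inter_iff, mem_Ioo, mem_Ioi]
      constructor
      · rintro ⟨⟨a, b⟩, c⟩; exact ⟨c, b⟩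
      · rintro ⟨a, b⟩; exact ⟨⟨this.trans_lt a, b⟩, a⟩
    rw [hk, hμ, setIntegral_indicator measurableSet_Ioi, hinter]
  have hae : (fun s => ∫ E, φ E * kerf p E s ∂μ) =ᵐ[ν]
      fun s => p * Real.exp (-2 * s) * gfun φ (p - 1) s :=
    (ae_restrict_iff' measurableSet_Ioc).2 (Eventually.of_forall hinner)
  refine ⟨hprod.integral_prod_right.congr hae, ?_⟩
  rw [← integral_congr_ae hae, ← integral_integral_swap (f := fun E s => φ E * kerf p E s) hprod]
  have hle : Real.exp (-η) ≤ 1 := Real.exp_le_one_iff.2 (by linarith)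
  rw [gfun, intervalIntegral.integral_of_le hle, integral_Ioc_eq_integral_Ioo]
  apply setIntegral_congr_fun measurableSet_Ioo
  intro E hE
  simp only
  rw [integral_const_mul, (ker_int hp hE).2]

lemma gfun_nonneg (φ : ℝ → ℝ) (hφnonneg : ∀ x ∈ Ioo (0:ℝ) 1, 0 ≤ φ x) (i η : ℝ) (hη : 0 < η) :
    0 ≤ gfun φ i η := by
  have hle : Real.exp (-η) ≤ 1 := Real.exp_le_one_iff.2 (by linarith)
  rw [gfun, intervalIntegral.integral_of_le hle, integral_Ioc_eq_integral_Ioo]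
  apply setIntegral_nonneg measurableSet_Ioo
  intro x hx
  have h1 := Real.exp_pos (-η)
  apply mul_nonneg (hφnonneg x ⟨h1.trans hx.1, hx.2⟩)
  apply Real.rpow_nonneg
  rw [exp_two_eq]; nlinarith [hx.1]

lemma grow_lin {f f' : ℝ → ℝ} {T c : ℝ} (hf : ∀ t, T ≤ t → HasDerivAt f (f' t) t)
    (hc : ∀ t, T ≤ t → c ≤ f' t) (t : ℝ) (ht : T ≤ t) : f T + c * (t - T) ≤ f t := by
  have h := (convex_Ici T).mul_sub_le_image_sub_of_le_deriv (f := f) (C := c)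
    (fun x hx => (hf x hx).continuousAt.continuousWithinAt)
    (fun x hx => (hf x (interior_subset hx)).differentiableAt.differentiableWithinAt)
    (fun x hx => by rw [(hf x (interior_subset hx)).deriv]; exact hc x (interior_subset hx))
    T self_mem_Ici t ht ht
  linarith

lemma no_global {W W' Y Y' : ℝ → ℝ} {T N κ : ℝ} (hN : 1 < N) (hκ : 0 < κ)
    (hW : ∀ t, T ≤ t → HasDerivAt W (W' t) t)
    (hY : ∀ t, T ≤ t → HasDerivAt Y (Y' t) t)
    (h1 : ∀ t, T ≤ t → (N - 1) * Real.exp (W t) ≤ W' t + N * Y' t)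
    (h2 : ∀ t, T ≤ t → -1 + κ * Real.exp (Y t) ≤ Y' t)
    (h3 : ∀ t, T ≤ t → 2 ≤ Real.exp (W t) → 1 ≤ Y' t) : False := by
  -- upper bound on Y
  have hYub : ∀ t, T ≤ t → Y t ≤ - Real.log κ := by
    intro t0 ht0
    by_contra hcon
    push Not at hcon
    have hf0 : Real.exp (-Y t0) < κ := by
      rw [← Real.lt_log_iff_exp_lt hκ]; linarith
    have hd : ∀ t, t0 ≤ t → HasDerivAt (fun t => -((Real.exp (-Y t) - κ) * Real.exp (-t)))
        ((Real.exp (-Y t) * Y' t + Real.exp (-Y t) - κ) * Real.exp (-t)) t := by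
      intro t ht
      have a1 := ((hY t (ht0.trans ht)).neg.exp).sub_const κ
      have a2 := ((hasDerivAt_id t).neg).exp
      refine ((a1.mul a2).neg).congr_deriv ?_
      simp only [id, Pi.neg_apply]
      ring
    have hnn : ∀ t, t0 ≤ t → 0 ≤ (Real.exp (-Y t) * Y' t + Real.exp (-Y t) - κ) * Real.exp (-t) := by
      intro t ht
      apply mul_nonneg _ (Real.exp_pos _).le
      have a1 := mul_le_mul_of_nonneg_left (h2 t (ht0.trans ht)) (Real.exp_pos (-Y t)).le
      have a2 : Real.exp (-Y t) * Real.exp (Y t) = 1 := by rw [← Real.exp_add]; simp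
      have : Real.exp (-Y t) * (-1 + κ * Real.exp (Y t)) = - Real.exp (-Y t) + κ := by
        linear_combination κ * a2
      linarith
    have hg := grow_lin hd hnn
    set d := (κ - Real.exp (-Y t0)) * Real.exp (-t0) with hdd
    have hdpos : 0 < d := mul_pos (by linarith) (Real.exp_pos _)
    obtain ⟨t, ht, hte⟩ : ∃ t, t0 ≤ t ∧ κ < d * Real.exp t := by
      have : Tendsto (fun t => d * Real.exp t) atTop atTop :=
        Real.tendsto_exp_atTop.const_mul_atTop hdpos
      obtain ⟨t, ht⟩ := ((this.eventually_gt_atTop κ).and (eventually_ge_atTop t0)).exists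
      exact ⟨t, ht.2, ht.1⟩
    have h5 := hg t ht
    have h6 : d ≤ (κ - Real.exp (-Y t)) * Real.exp (-t) := by rw [hdd]; linarith
    have h7 := mul_le_mul_of_nonneg_right h6 (Real.exp_pos t).le
    have h8 : Real.exp (-t) * Real.exp t = 1 := by rw [← Real.exp_add]; simp
    rw [mul_assoc (κ - Real.exp (-Y t)), h8] at h7
    linarith [Real.exp_pos (-Y t)]
  set B := - Real.log κ with hB
  have hZd : ∀ t, T ≤ t → HasDerivAt (fun t => W t + N * Y t) (W' t + N * Y' t) t :=
    fun t ht => (hW t ht).add ((hY t ht).const_mul N)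
  have hZ0 : ∀ t, T ≤ t → W T + N * Y T ≤ W t + N * Y t := by
    intro t ht
    have := grow_lin (c := 0) hZd (fun t ht => le_trans
      (mul_nonneg (by linarith) (Real.exp_pos _).le) (h1 t ht)) t ht
    linarith
  set c := (N - 1) * Real.exp (W T + N * Y T - N * B) with hc
  have hcpos : 0 < c := mul_pos (by linarith) (Real.exp_pos _)
  have hZ1 : ∀ t, T ≤ t → c ≤ W' t + N * Y' t := by
    intro t ht
    refine le_trans ?_ (h1 t ht)
    apply mul_le_mul_of_nonneg_left _ (by linarith : (0:ℝ) ≤ N - 1)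
    apply Real.exp_le_exp.2
    have a1 := hZ0 t ht
    have a2 := mul_le_mul_of_nonneg_left (hYub t ht) (by linarith : (0:ℝ) ≤ N)
    linarith
  have hZ2 := grow_lin hZd hZ1
  obtain ⟨T1, hT1, hT1'⟩ : ∃ T1, T ≤ T1 ∧ ∀ t, T1 ≤ t → 2 ≤ Real.exp (W t) := by
    refine ⟨T + |2 + N * B - (W T + N * Y T)| / c, by
      have : 0 ≤ |2 + N * B - (W T + N * Y T)| / c := by positivity
      linarith, fun t ht => ?_⟩
    have h0 : |2 + N * B - (W T + N * Y T)| / c ≤ t - T := by linarith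
    have hTt : T ≤ t := by
      have : 0 ≤ |2 + N * B - (W T + N * Y T)| / c := by positivity
      linarith
    rw [div_le_iff₀ hcpos] at h0
    have a1 := hZ2 t hTt
    have a2 := mul_le_mul_of_nonneg_left (hYub t hTt) (by linarith : (0:ℝ) ≤ N)
    have a3 := le_abs_self (2 + N * B - (W T + N * Y T))
    have a4 : 2 ≤ W t := by nlinarith
    linarith [Real.add_one_le_exp (W t)]
  have hfin := grow_lin (f := Y) (f' := Y') (T := T1) (c := 1) (fun t ht => hY t (hT1.trans ht))
    (fun t ht => h3 t (hT1.trans ht) (hT1' t ht)) (T1 + |B - Y T1| + 1)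
    (by linarith [abs_nonneg (B - Y T1)])
  have h9 := hYub (T1 + |B - Y T1| + 1) (by linarith [abs_nonneg (B - Y T1)])
  linarith [le_abs_self (B - Y T1)]

lemma dyn {l A T : ℝ} (hl : -1 < l) (hA : 0 < A) {S S' G M H w : ℝ → ℝ}
    (hw : ∀ t, w t = A * Real.exp ((2 * l + 3) * t) * Real.exp ((2 * l + 4) * H t) * G (H t) /
      (S (H t) * M t))
    (hSpos : ∀ t, T ≤ t → 0 < S (H t))
    (hSle : ∀ t, T ≤ t → S (H t) ≤ 1 / (3 + 2 * l))
    (hGpos : ∀ t, T ≤ t → 0 < G (H t))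
    (hS' : ∀ t, T ≤ t → HasDerivAt S (S' (H t)) (H t))
    (hG' : ∀ t, T ≤ t → HasDerivAt G (G (H t) * (1 / S (H t) - (3 + 2 * l))) (H t))
    (hmain : ∀ t, T ≤ t → 1 / (4 + 2 * l) + (7 + 4 * l) / (4 + 2 * l) * S (H t) ≤ S' (H t))
    (hMpos : ∀ t, T ≤ t → 0 < M t)
    (hMlt : ∀ t, T ≤ t → 2 * M t < Real.exp t)
    (hM' : ∀ t, T ≤ t → HasDerivAt M (M t * w t) t)
    (hH' : ∀ t, T ≤ t →
      HasDerivAt H (-(M t / (Real.exp t - 2 * M t) * (1 + S (H t) * w t))) t) : False := by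
  set v : ℝ → ℝ := fun t => M t / (Real.exp t - 2 * M t) with hv
  have hwpos : ∀ t, T ≤ t → 0 < w t := by
    intro t ht
    have := hSpos t ht; have := hGpos t ht; have := hMpos t ht
    rw [hw]; positivity
  have hvpos : ∀ t, T ≤ t → 0 < v t := fun t ht =>
    div_pos (hMpos t ht) (by linarith [hMlt t ht])
  set W : ℝ → ℝ := fun t => Real.log A + (2 * l + 3) * t + (2 * l + 4) * H t + Real.log (G (H t))
    - Real.log (S (H t)) - Real.log (M t) with hWdef
  set Y : ℝ → ℝ := fun t => Real.log (M t) - Real.log (Real.exp t - 2 * M t) - Real.log (S (H t))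
    with hYdef
  have hexpW : ∀ t, T ≤ t → Real.exp (W t) = w t := by
    intro t ht
    simp only [hWdef]
    rw [Real.exp_sub, Real.exp_sub, Real.exp_add, Real.exp_add, Real.exp_add, Real.exp_log hA,
      Real.exp_log (hGpos t ht), Real.exp_log (hSpos t ht), Real.exp_log (hMpos t ht), hw, div_div]
  have hexpY : ∀ t, T ≤ t → Real.exp (Y t) = v t / S (H t) := by
    intro t ht
    simp only [hYdef]
    rw [Real.exp_sub, Real.exp_sub, Real.exp_log (show 0 < Real.exp t - 2 * M t by linarith [hMlt t ht]),
      Real.exp_log (hSpos t ht), Real.exp_log (hMpos t ht)]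
  have hYd : ∀ t, T ≤ t → HasDerivAt Y ((w t - 1) * (1 + 2 * v t) +
      S' (H t) * (v t / S (H t)) * (1 + S (H t) * w t)) t := by
    intro t ht
    have hd : Real.exp t - 2 * M t ≠ 0 := (sub_pos.2 (hMlt t ht)).ne'
    have hm := (hMpos t ht).ne'
    have hs := (hSpos t ht).ne'
    have a1 := (hM' t ht).log hm
    have a2 := ((Real.hasDerivAt_exp t).sub ((hM' t ht).const_mul 2)).log hd
    have a3 := ((hS' t ht).comp t (hH' t ht)).log hs
    refine ((a1.sub a2).sub a3).congr_deriv ?_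
    simp only [hv, Function.comp, Pi.sub_apply]
    have hed : Real.exp t = (Real.exp t - 2 * M t) + 2 * M t := by ring
    generalize Real.exp t - 2 * M t = d at hed hd ⊢
    rw [hed]
    field_simp
    ring
  have hWd : ∀ t, T ≤ t → HasDerivAt W (3 + 2 * l - w t -
      (1 + S (H t) - S' (H t)) * (v t / S (H t)) * (1 + S (H t) * w t)) t := by
    intro t ht
    have hd : Real.exp t - 2 * M t ≠ 0 := (sub_pos.2 (hMlt t ht)).ne'
    have hm := (hMpos t ht).ne'
    have hs := (hSpos t ht).ne'
    have hg := (hGpos t ht).ne'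
    have a1 := (hM' t ht).log hm
    have a2 := ((hG' t ht).comp t (hH' t ht)).log hg
    have a3 := ((hS' t ht).comp t (hH' t ht)).log hs
    have a4 := (((hasDerivAt_id t).const_mul (2 * l + 3)).const_add (Real.log A)).add
      ((hH' t ht).const_mul (2 * l + 4))
    refine (((a4.add a2).sub a3).sub a1).congr_deriv ?_
    simp only [hv, Function.comp]
    field_simp
    ring
  have hκ : 0 < (2 + 2 * l) / ((3 + 2 * l) * (4 + 2 * l)) :=
    div_pos (by linarith) (mul_pos (by linarith) (by linarith))
  have h3l : 0 < 3 + 2 * l := by linarith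
  have h4l : 0 < 4 + 2 * l := by linarith
  have hmain' : ∀ t, T ≤ t → 1 + (7 + 4 * l) * S (H t) ≤ (4 + 2 * l) * S' (H t) := by
    intro t ht
    have := mul_le_mul_of_nonneg_left (hmain t ht) h4l.le
    have e : (4 + 2 * l) * (1 / (4 + 2 * l) + (7 + 4 * l) / (4 + 2 * l) * S (H t)) =
      1 + (7 + 4 * l) * S (H t) := by field_simp
    linarith
  refine no_global (N := 3 + 2 * l) (by linarith) hκ hWd hYd ?_ ?_ ?_
  · intro t ht
    rw [hexpW t ht]
    have hs := hSpos t ht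
    have hw0 := hwpos t ht
    have hv0 := hvpos t ht
    set y := v t / S (H t) with hy
    have hvy : v t = S (H t) * y := by rw [hy]; field_simp
    have hy0 : 0 < y := div_pos hv0 hs
    have hb : 0 ≤ y * (1 + S (H t) * w t) *
        ((4 + 2 * l) * S' (H t) - (1 + (7 + 4 * l) * S (H t))) :=
      mul_nonneg (by positivity) (by linarith [hmain' t ht])
    have hb2 : 0 ≤ (3 + 2 * l) * (S (H t) * y * w t) := by positivity
    have hb3 : 0 ≤ (3 + 2 * l) * (S (H t) * y * (S (H t) * w t)) := by positivity
    rw [hvy]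
    nlinarith
  · intro t ht
    rw [hexpY t ht]
    have hs := hSpos t ht
    have hw0 := hwpos t ht
    have hv0 := hvpos t ht
    set y := v t / S (H t) with hy
    have hvy : v t = S (H t) * y := by rw [hy]; field_simp
    have hy0 : 0 < y := div_pos hv0 hs
    have hk : (2 + 2 * l) / ((3 + 2 * l) * (4 + 2 * l)) ≤ S' (H t) - 2 * S (H t) := by
      have a1 := hmain' t ht
      have a2 := hSle t ht
      have a3 : (1 - S (H t)) ≤ (4 + 2 * l) * (S' (H t) - 2 * S (H t)) := by linarith
      have a4 : (2 + 2 * l) / ((3 + 2 * l) * (4 + 2 * l)) = (1 - 1 / (3 + 2 * l)) / (4 + 2 * l) := by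
        field_simp; ring
      rw [a4, div_le_iff₀ h4l]
      linarith
    have hS'0 : 0 ≤ S' (H t) := by linarith
    have b1 := mul_le_mul_of_nonneg_right hk hy0.le
    have b2 : 0 ≤ S' (H t) * y * (S (H t) * w t) := by positivity
    have b3 : 0 ≤ w t * (1 + 2 * (S (H t) * y)) := by positivity
    rw [hvy]
    nlinarith
  · intro t ht h2
    rw [hexpW t ht] at h2
    have hs := hSpos t ht
    have hw0 := hwpos t ht
    have hv0 := hvpos t ht
    have hS'0 : 0 ≤ S' (H t) := by
      have := hmain' t ht
      have h7 : 0 ≤ (7 + 4 * l) * S (H t) := mul_nonneg (by linarith) hs.le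
      by_contra hc
      push Not at hc
      nlinarith
    have b2 : 0 ≤ S' (H t) * (v t / S (H t)) * (1 + S (H t) * w t) := by positivity
    nlinarith

lemma sigma_props (l : ℝ) (hl : -1 < l) (φ : ℝ → ℝ)
    (hφcont : ContinuousOn φ (Ioo 0 1))
    (hφnonneg : ∀ x ∈ Ioo (0:ℝ) 1, 0 ≤ φ x)
    (hφbound : ∃ C > (0:ℝ), ∃ ε > (0:ℝ), ∃ δ ∈ Ioo (0:ℝ) 1,
      ∀ x ∈ Ioo (1 - δ) 1, φ x ≤ C * (1 - x) ^ (-1 + ε))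
    (ηhat : ℝ)
    (hmain : ∀ η : ℝ, 0 < η → η ≤ ηhat →
      1 / (4 + 2 * l) + (7 + 4 * l) / (4 + 2 * l) * sigmaFun φ l η
        ≤ deriv (sigmaFun φ l) η) (η : ℝ) (hη : 0 < η) (hηh : η ≤ ηhat) :
    0 < sigmaFun φ l η ∧ sigmaFun φ l η ≤ 1 / (3 + 2 * l) ∧ 0 < gfun φ (l + 3 / 2) η ∧
    HasDerivAt (sigmaFun φ l) (deriv (sigmaFun φ l) η) η ∧
    HasDerivAt (gfun φ (l + 3 / 2))
      (gfun φ (l + 3 / 2) η * (1 / sigmaFun φ l η - (3 + 2 * l))) η := by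
  set G := gfun φ (l + 3 / 2) with hG
  set q : ℝ → ℝ := fun s => Real.exp (-2 * s) * gfun φ (l + 1 / 2) s with hq
  set S := sigmaFun φ l with hS
  have h3 : 0 < 3 + 2 * l := by linarith
  have h4 : 0 < 4 + 2 * l := by linarith
  have hGnn : ∀ s, 0 < s → 0 ≤ G s := fun s hs => gfun_nonneg φ hφnonneg _ s hs
  have hqnn : ∀ s, 0 < s → 0 ≤ q s := fun s hs =>
    mul_nonneg (Real.exp_pos _).le (gfun_nonneg φ hφnonneg _ s hs)
  have hSdef : ∀ s, S s = (1 / (3 + 2 * l)) * G s / (G s + (1 / 2) * q s) := by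
    intro s
    simp only [hS, sigmaFun, hG, hq]
    rw [mul_assoc (1 / 2 : ℝ)]
  have hSnn : ∀ s, 0 < s → 0 ≤ S s := by
    intro s hs
    have := hGnn s hs; have := hqnn s hs
    rw [hSdef]; positivity
  have hdpos : ∀ s, 0 < s → s ≤ ηhat → 0 < deriv S s := by
    intro s hs hs'
    refine lt_of_lt_of_le ?_ (hmain s hs hs')
    have a := hSnn s hs
    have b : 0 ≤ (7 + 4 * l) / (4 + 2 * l) * S s :=
      mul_nonneg (div_nonneg (by linarith) h4.le) a
    have c : 0 < 1 / (4 + 2 * l) := by positivity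
    linarith
  have hdiff : ∀ s, 0 < s → s ≤ ηhat → DifferentiableAt ℝ S s := fun s hs hs' =>
    differentiableAt_of_deriv_ne_zero (hdpos s hs hs').ne'
  have hSpos : 0 < S η := by
    have hmono : StrictMonoOn S (Icc (η / 2) η) := by
      apply strictMonoOn_of_deriv_pos (convex_Icc _ _)
      · intro x hx
        exact (hdiff x (by linarith [hx.1]) (hx.2.trans hηh)).continuousAt.continuousWithinAt
      · intro x hx
        have hx := interior_subset hx
        exact hdpos x (by linarith [hx.1]) (hx.2.trans hηh)
    have := hmono (left_mem_Icc.2 (by linarith)) (right_mem_Icc.2 (by linarith)) (by linarith)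
    linarith [hSnn (η / 2) (by linarith)]
  have hGpos : 0 < G η := by
    rcases (hGnn η hη).lt_or_eq with h | h
    · exact h
    · rw [hSdef, ← h] at hSpos; simp at hSpos
  have hSle : S η ≤ 1 / (3 + 2 * l) := by
    have := hqnn η hη
    rw [hSdef, div_le_iff₀ (by positivity)]
    apply mul_le_mul_of_nonneg_left _ (by positivity)
    linarith
  -- relation
  have hqrel : ∀ s, S s ≠ 0 → (l + 3 / 2) * q s = G s * (1 / S s - (3 + 2 * l)) := by
    intro s hs
    have hne : G s + (1 / 2) * q s ≠ 0 := by
      intro h; apply hs; rw [hSdef, h, div_zero]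
    have hgne : G s ≠ 0 := by
      intro h; apply hs; rw [hSdef, h]; simp
    rw [hSdef]
    field_simp
    ring
  set f : ℝ → ℝ := fun s => (l + 3 / 2) * Real.exp (-2 * s) * gfun φ (l + 3 / 2 - 1) s with hf
  have hfq : ∀ s, f s = (l + 3 / 2) * q s := by
    intro s
    simp only [hf, hq]
    rw [show l + 3 / 2 - 1 = l + 1 / 2 by ring, mul_assoc]
  have hGeq : ∀ s, 0 < s → IntervalIntegrable f volume 0 s ∧ G s = ∫ x in (0:ℝ)..s, f x := by
    intro s hs
    obtain ⟨a, b⟩ := gfun_eq φ hφcont hφnonneg hφbound (l + 3 / 2) (by linarith) s hs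
    exact ⟨(intervalIntegrable_iff_integrableOn_Ioc_of_le hs.le).2 a, by
      rw [intervalIntegral.integral_of_le hs.le]; exact b⟩
  have hnhds : ∀ᶠ s in nhds η, 0 < s := lt_mem_nhds hη
  have hGev : G =ᶠ[nhds η] fun s => ∫ x in (0:ℝ)..s, f x := by
    filter_upwards [hnhds] with s hs using (hGeq s hs).2
  have hGcont : ContinuousAt G η := by
    refine ContinuousAt.congr ?_ hGev.symm
    have hi := (hGeq (η + 1) (by linarith)).1
    have := intervalIntegral.continuousOn_primitive_interval' hi left_mem_uIcc
    rw [uIcc_of_le (by linarith)] at this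
    exact this.continuousAt (Icc_mem_nhds hη (by linarith))
  have hScont : ContinuousAt S η := (hdiff η hη hηh).continuousAt
  have hfcont : ContinuousAt f η := by
    have h1 : ContinuousAt (fun s => G s * (1 / S s - (3 + 2 * l))) η :=
      hGcont.mul ((continuousAt_const.div hScont hSpos.ne').sub continuousAt_const)
    refine h1.congr ?_
    filter_upwards [hScont.eventually_ne hSpos.ne'] with s hs
    rw [hfq, hqrel s hs]
  refine ⟨hSpos, hSle, hGpos, (hdiff η hη hηh).hasDerivAt, ?_⟩
  have hmeas : StronglyMeasurableAtFilter f (nhds η) := by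
    refine ⟨Ioc 0 (η + 1), Ioc_mem_nhds hη (by linarith), ?_⟩
    exact ((intervalIntegrable_iff_integrableOn_Ioc_of_le (by linarith)).1
      (hGeq (η + 1) (by linarith)).1).aestronglyMeasurable
  have hd := intervalIntegral.integral_hasDerivAt_right (hGeq η hη).1 hmeas hfcont
  refine (hd.congr_of_eventuallyEq hGev).congr_deriv ?_
  rw [hfq, hqrel η hSpos.ne']

lemma gfun_mono (φ : ℝ → ℝ)
    (hφcont : ContinuousOn φ (Ioo 0 1))
    (hφnonneg : ∀ x ∈ Ioo (0:ℝ) 1, 0 ≤ φ x)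
    (hφbound : ∃ C > (0:ℝ), ∃ ε > (0:ℝ), ∃ δ ∈ Ioo (0:ℝ) 1,
      ∀ x ∈ Ioo (1 - δ) 1, φ x ≤ C * (1 - x) ^ (-1 + ε)) (p : ℝ) (hp : 0 < p) (η η' : ℝ)
    (hη : 0 < η) (h : η ≤ η') : gfun φ p η ≤ gfun φ p η' := by
  obtain ⟨a, b⟩ := gfun_eq φ hφcont hφnonneg hφbound p hp η hη
  obtain ⟨a', b'⟩ := gfun_eq φ hφcont hφnonneg hφbound p hp η' (hη.trans_le h)
  rw [b, b']
  apply setIntegral_mono_set a'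
  · refine (ae_restrict_iff' measurableSet_Ioc).2 (Eventually.of_forall fun x hx => ?_)
    exact mul_nonneg (mul_nonneg hp.le (Real.exp_pos _).le) (gfun_nonneg φ hφnonneg _ x hx.1)
  · exact (Ioc_subset_Ioc_right h).eventuallyLE

lemma acoef_pos (l : ℝ) (hl : -1 < l) : 0 < acoef l := by
  unfold acoef
  have h1 := Real.Gamma_pos_of_pos (show 0 < l + 1 by linarith)
  have h2 := Real.Gamma_pos_of_pos (show 0 < l + 3 / 2 by linarith)
  have h3 : 0 < l + 3 / 2 := by linarith
  have := Real.pi_pos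
  positivity

/-- If there is `η̂ > 0` with
`σ'(η) ≥ 1/(4+2l) + ((7+4l)/(4+2l))·σ(η)` for all `0 < η ≤ η̂`, then every solution
of the static Einstein–Vlasov equations (on a maximal interval `(r₁,R)`) has finite
radius `R < ∞` and finite mass `sup m < ∞`. -/
theorem stmt0
    (l : ℝ) (hl : -1 < l)
    (φ : ℝ → ℝ)
    (hφcont : ContinuousOn φ (Ioo 0 1))
    (hφnonneg : ∀ x ∈ Ioo (0:ℝ) 1, 0 ≤ φ x)
    (hφne : ∃ x ∈ Ioo (0:ℝ) 1, φ x ≠ 0)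
    (hφbound : ∃ C > (0:ℝ), ∃ ε > (0:ℝ), ∃ δ ∈ Ioo (0:ℝ) 1,
      ∀ x ∈ Ioo (1 - δ) 1, φ x ≤ C * (1 - x) ^ (-1 + ε))
    (hφholder : l < -(1/2) → ∃ α > -l - 1/2, ∃ Cα > (0:ℝ),
      ∀ x ∈ Ioo (0:ℝ) 1, ∀ y ∈ Ioo (0:ℝ) 1, |φ x - φ y| ≤ Cα * |x - y| ^ α)
    (k₁ k₂ : ℝ) (hk₁ : 0 < k₁) (hk₁₂ : k₁ < k₂)
    (hσ'near : ∃ η₀ > (0:ℝ), ∀ η ∈ Ioo (0:ℝ) η₀, deriv (sigmaFun φ l) η ∈ Ioo k₁ k₂)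
    (ηhat : ℝ) (hηhat : 0 < ηhat)
    (hmain : ∀ η : ℝ, 0 < η → η ≤ ηhat →
      1 / (4 + 2 * l) + (7 + 4 * l) / (4 + 2 * l) * sigmaFun φ l η
        ≤ deriv (sigmaFun φ l) η)
    (r₁ : ℝ) (hr₁ : 0 ≤ r₁) (R : EReal) (hRr₁ : (r₁ : EReal) < R)
    (m ηf : ℝ → ℝ)
    (hsol : IsEVSolution φ l m ηf r₁ R)
    (hmax : ∀ R' : EReal, R < R' → ∀ m' ηf' : ℝ → ℝ,
      (∀ r : ℝ, r₁ < r → (r : EReal) < R → m' r = m r ∧ ηf' r = ηf r) →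
      ¬ IsEVSolution φ l m' ηf' r₁ R') :
    R < ⊤ ∧ ∃ Mb : ℝ, ∀ r : ℝ, r₁ < r → (r : EReal) < R → m r ≤ Mb := by
  have hfin : ∀ R0 : ℝ, R = (R0 : EReal) → R < ⊤ ∧ ∃ Mb : ℝ, ∀ r : ℝ, r₁ < r → (r : EReal) < R → m r ≤ Mb := by
    intro R0 hR
    subst hR
    refine ⟨EReal.coe_lt_top _, R0 / 2, fun r hr hrR => ?_⟩
    obtain ⟨-, -, h, -⟩ := hsol r hr hrR
    have := EReal.coe_lt_coe_iff.1 hrR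
    linarith
  have key : R ≠ ⊤ := by
    rintro rfl
    have hs : ∀ r, r₁ < r → _ := fun r hr => hsol r hr (EReal.coe_lt_top r)
    have hprop := sigma_props l hl φ hφcont hφnonneg hφbound ηhat hmain
    have ha := acoef_pos l hl
    have hpi := Real.pi_pos
    have h32 : 0 < l + 3 / 2 := by linarith
    have h3l : 0 < 3 + 2 * l := by linarith
    set G := gfun φ (l + 3 / 2) with hG
    have hGnn : ∀ s, 0 < s → 0 ≤ G s := fun s hs => gfun_nonneg φ hφnonneg _ s hs
    have hp_nn : ∀ r η, 0 < r → 0 < η → 0 ≤ pRad φ l r η := by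
      intro r η hr hη
      have := hGnn η hη
      unfold pRad; positivity
    have hrho : ∀ r η, 0 < r → 0 < η → (3 + 2 * l) * pRad φ l r η ≤ rhoFun φ l r η := by
      intro r η hr hη
      have h1 := gfun_nonneg φ hφnonneg (l + 1 / 2) η hη
      have h2 : 0 ≤ (l + 3 / 2) * acoef l * r ^ (2 * l) * Real.exp ((2 * l + 4) * η) *
        (Real.exp (-2 * η) * gfun φ (l + 1 / 2) η) := by positivity
      unfold pRad rhoFun
      nlinarith
    -- passage to logarithmic time
    set M : ℝ → ℝ := fun t => m (Real.exp t) with hM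
    set H : ℝ → ℝ := fun t => ηf (Real.exp t) with hH
    obtain ⟨T0, hT0⟩ : ∃ T0, ∀ t, T0 ≤ t → r₁ < Real.exp t := by
      have := Real.tendsto_exp_atTop.eventually_gt_atTop r₁
      exact eventually_atTop.1 this
    have hMd : ∀ t, T0 ≤ t → HasDerivAt M
        (4 * Real.pi * Real.exp t ^ 2 * rhoFun φ l (Real.exp t) (H t) * Real.exp t) t := by
      intro t ht
      obtain ⟨-, -, -, h, -⟩ := hs _ (hT0 t ht)
      exact h.comp t (Real.hasDerivAt_exp t)
    have hHd0 : ∀ t, T0 ≤ t → HasDerivAt H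
        (-(M t / (Real.exp t - 2 * M t) * (1 + 4 * Real.pi * Real.exp t ^ 3 *
          pRad φ l (Real.exp t) (H t) / M t))) t := by
      intro t ht
      obtain ⟨-, h0, h2, -, h⟩ := hs _ (hT0 t ht)
      have hm0 : M t ≠ 0 := h0.ne'
      have he : Real.exp t ≠ 0 := (Real.exp_pos t).ne'
      have hd : Real.exp t - 2 * M t ≠ 0 := (sub_pos.2 h2).ne'
      refine (h.comp t (Real.hasDerivAt_exp t)).congr_deriv ?_
      change -((1 - 2 * M t / Real.exp t)⁻¹ * (M t / Real.exp t + 4 * Real.pi * Real.exp t ^ 2 * pRad φ l (Real.exp t) (H t))) / Real.exp t * Real.exp t = _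
      rw [show 1 - 2 * M t / Real.exp t = (Real.exp t - 2 * M t) / Real.exp t by field_simp]
      field_simp
    have hHpos : ∀ t, T0 ≤ t → 0 < H t := fun t ht => (hs _ (hT0 t ht)).1
    have hMpos : ∀ t, T0 ≤ t → 0 < M t := fun t ht => (hs _ (hT0 t ht)).2.1
    have hMlt : ∀ t, T0 ≤ t → 2 * M t < Real.exp t := fun t ht => (hs _ (hT0 t ht)).2.2.1
    have hHanti : ∀ a b, T0 ≤ a → a ≤ b → H b ≤ H a := by
      intro a b ha' hab
      have := grow_lin (f := fun t => - H t) (T := a) (c := 0) (fun t ht => (hHd0 t (ha'.trans ht)).neg)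
        (fun t ht => by
          have ht := ha'.trans ht
          have h1 := hMpos t ht
          have h2 := sub_pos.2 (hMlt t ht)
          have h3 := hp_nn (Real.exp t) (H t) (Real.exp_pos t) (hHpos t ht)
          rw [neg_neg]
          positivity) b hab
      linarith
    -- eta eventually drops below ηhat
    obtain ⟨T1, hT1, hT1h⟩ : ∃ T1, T0 ≤ T1 ∧ H T1 ≤ ηhat := by
      by_contra hcon
      push Not at hcon
      have hGh := (hprop ηhat hηhat le_rfl).2.2.1
      set c := 4 * Real.pi * ((3 + 2 * l) * (acoef l * Real.exp ((2 * l + 4) * ηhat) * G ηhat)) with hc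
      have hcpos : 0 < c := by positivity
      have hu : ∀ t, T0 ≤ t → c * Real.exp ((2 * l + 2) * t) ≤
          4 * Real.pi * Real.exp t ^ 2 * rhoFun φ l (Real.exp t) (H t) := by
        intro t ht
        have h1 := hrho (Real.exp t) (H t) (Real.exp_pos t) (hHpos t ht)
        have h2 : acoef l * Real.exp t ^ (2 * l) * Real.exp ((2 * l + 4) * ηhat) * G ηhat ≤
            pRad φ l (Real.exp t) (H t) := by
          unfold pRad
          have h4 : Real.exp ((2 * l + 4) * ηhat) ≤ Real.exp ((2 * l + 4) * H t) :=
            Real.exp_le_exp.2 (mul_le_mul_of_nonneg_left (hcon t ht).le (by linarith))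
          have h5 : G ηhat ≤ G (H t) := gfun_mono φ hφcont hφnonneg hφbound _ h32 _ _ hηhat (hcon t ht).le
          have : 0 < Real.exp t ^ (2 * l) := by positivity
          exact mul_le_mul (mul_le_mul_of_nonneg_left h4 (by positivity)) h5 hGh.le (by positivity)
        have h6 : Real.exp ((2 * l + 2) * t) = Real.exp t ^ 2 * Real.exp t ^ (2 * l) := by
          rw [← Real.exp_mul, ← Real.exp_nat_mul, ← Real.exp_add]
          congr 1; push_cast; ring
        have h7 : c * Real.exp ((2 * l + 2) * t) = 4 * Real.pi * Real.exp t ^ 2 * ((3 + 2 * l) *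
          (acoef l * Real.exp t ^ (2 * l) * Real.exp ((2 * l + 4) * ηhat) * G ηhat)) := by
          rw [h6, hc]; ring
        rw [h7]
        apply mul_le_mul_of_nonneg_left _ (by positivity)
        exact (mul_le_mul_of_nonneg_left h2 h3l.le).trans h1
      obtain ⟨T2, hT2⟩ : ∃ T2, ∀ t, T2 ≤ t → 2 ≤ c * Real.exp ((2 * l + 2) * t) := by
        have h1 : Tendsto (fun t : ℝ => (2 * l + 2) * t) atTop atTop :=
          tendsto_id.const_mul_atTop (by linarith)
        have := ((Real.tendsto_exp_atTop.comp h1).const_mul_atTop hcpos).eventually_ge_atTop 2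
        exact eventually_atTop.1 this
      set T3 := max T0 T2 with hT3
      have hxd : ∀ t, T3 ≤ t → HasDerivAt (fun t => M t * Real.exp (-t))
          (4 * Real.pi * Real.exp t ^ 2 * rhoFun φ l (Real.exp t) (H t) - M t * Real.exp (-t)) t := by
        intro t ht
        have a2 := ((hasDerivAt_id t).neg).exp
        refine ((hMd t ((le_max_left _ _).trans ht)).mul a2).congr_deriv ?_
        simp only [Pi.neg_apply, id]
        have h8 : Real.exp t * Real.exp (-t) = 1 := by rw [← Real.exp_add]; simp
        linear_combination 4 * Real.pi * Real.exp t ^ 2 * rhoFun φ l (Real.exp t) (H t) * h8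
      have hxle : ∀ t, T0 ≤ t → M t * Real.exp (-t) ≤ 1 := by
        intro t ht
        have h8 : Real.exp t * Real.exp (-t) = 1 := by rw [← Real.exp_add]; simp
        have h9 := hMlt t ht
        have h10 := hMpos t ht
        have : M t ≤ Real.exp t := by linarith
        have := mul_le_mul_of_nonneg_right this (Real.exp_pos (-t)).le
        linarith
      have hg := grow_lin (c := 1) hxd (fun t ht => by
        have h1 := hu t ((le_max_left _ _).trans ht)
        have h2 := hT2 t ((le_max_right _ _).trans ht)
        have h3 := hxle t ((le_max_left _ _).trans ht)
        linarith) (T3 + 2) (by linarith)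
      have h1 := hxle (T3 + 2) (by linarith [le_max_left T0 T2])
      have h2 : 0 < M T3 * Real.exp (-T3) := mul_pos (hMpos _ (le_max_left _ _)) (Real.exp_pos _)
      linarith
    have hHle : ∀ t, T1 ≤ t → H t ≤ ηhat := fun t ht => (hHanti T1 t hT1 ht).trans hT1h
    have hP : ∀ t, T1 ≤ t → _ := fun t ht => hprop (H t) (hHpos t (hT1.trans ht)) (hHle t ht)
    set S := sigmaFun φ l with hS
    have hprho : ∀ r η, S η ≠ 0 → rhoFun φ l r η = pRad φ l r η / S η := by
      intro r η hne
      have h1 : S η = (1 / (3 + 2 * l)) * G η /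
        (G η + (1 / 2) * Real.exp (-2 * η) * gfun φ (l + 1 / 2) η) := rfl
      have hn : G η + (1 / 2) * Real.exp (-2 * η) * gfun φ (l + 1 / 2) η ≠ 0 := by
        intro h; apply hne; rw [h1, h, div_zero]
      have hgne : G η ≠ 0 := by
        intro h; apply hne; rw [h1, h]; simp
      rw [h1]
      unfold rhoFun pRad
      rw [← hG]
      field_simp
      ring
    have hpexp : ∀ t, Real.exp t ^ 3 * pRad φ l (Real.exp t) (H t) =
        acoef l * Real.exp ((2 * l + 3) * t) * Real.exp ((2 * l + 4) * H t) * G (H t) := by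
      intro t
      have h6 : Real.exp ((2 * l + 3) * t) = Real.exp t ^ 3 * Real.exp t ^ (2 * l) := by
        rw [← Real.exp_mul, ← Real.exp_nat_mul, ← Real.exp_add]
        congr 1; push_cast; ring
      unfold pRad
      rw [h6]; ring
    refine dyn (l := l) (A := 4 * Real.pi * acoef l) (T := T1) hl (by positivity) (S := S)
      (S' := deriv S) (G := G) (M := M) (H := H)
      (w := fun t => 4 * Real.pi * acoef l * Real.exp ((2 * l + 3) * t) *
        Real.exp ((2 * l + 4) * H t) * G (H t) / (S (H t) * M t)) (fun t => rfl)
      (fun t ht => (hP t ht).1) (fun t ht => (hP t ht).2.1) (fun t ht => (hP t ht).2.2.1)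
      (fun t ht => (hP t ht).2.2.2.1) (fun t ht => (hP t ht).2.2.2.2)
      (fun t ht => hmain (H t) (hHpos t (hT1.trans ht)) (hHle t ht))
      (fun t ht => hMpos t (hT1.trans ht)) (fun t ht => hMlt t (hT1.trans ht)) ?_ ?_
    · intro t ht
      refine (hMd t (hT1.trans ht)).congr_deriv ?_
      have hs0 := (hP t ht).1.ne'
      have hm0 := (hMpos t (hT1.trans ht)).ne'
      rw [hprho _ _ hs0]
      field_simp
      linear_combination hpexp t
    · intro t ht
      refine (hHd0 t (hT1.trans ht)).congr_deriv ?_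
      have hs0 := (hP t ht).1.ne'
      have hm0 := (hMpos t (hT1.trans ht)).ne'
      congr 3
      field_simp
      linear_combination hpexp t
  have hbot : R ≠ ⊥ := by
    rintro rfl
    exact not_lt_bot hRr₁
  exact hfin R.toReal (EReal.coe_toReal key hbot).symm
end

section
/- Suppose there exists η̂ > 0 such that σ'(η) ≥ 1/(4+2l) + ((7+4l)/(4+2l))·σ(η) for all 0 < η ≤ η̂. Then every interior orbit of the Einstein–Vlasov dynamical system satisfies Ω(λ) → 0 and V(λ) → 1 as λ → +∞; that is, the ω-limit set of every interior orbit lies in {Ω = 0} ∩ {V = 1}. -/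
open Filter Set

lemma aux_barbalat (G G' f f' : ℝ → ℝ) (T K M : ℝ)
    (hG : ∀ t, T ≤ t → HasDerivAt G (G' t) t)
    (hf : ∀ t, T ≤ t → HasDerivAt f (f' t) t)
    (hK : ∀ t, T ≤ t → |f' t| ≤ K)
    (hf0 : ∀ t, T ≤ t → 0 ≤ f t)
    (hGf : ∀ t, T ≤ t → f t ≤ G' t)
    (hM : ∀ t, T ≤ t → G t ≤ M) : Tendsto f atTop (nhds 0) := by
  have hK0 : 0 ≤ K := (abs_nonneg _).trans (hK T le_rfl)
  have hmono : MonotoneOn G (Ici T) := by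
    apply monotoneOn_of_deriv_nonneg (convex_Ici T)
    · exact fun t ht => (hG t ht).continuousAt.continuousWithinAt
    · intro t ht
      rw [interior_Ici] at ht
      exact (hG t (le_of_lt ht)).differentiableAt.differentiableWithinAt
    · intro t ht
      rw [interior_Ici] at ht
      have ht' : T ≤ t := le_of_lt ht
      rw [(hG t ht').deriv]
      exact (hf0 t ht').trans (hGf t ht')
  rw [Metric.tendsto_atTop]
  intro ε hε
  set h : ℝ := ε / (2 * (K + 1)) with hh
  have hhpos : 0 < h := by positivity
  have hKh : K * h < ε / 2 + 0 := by
    have : (K + 1) * h = ε / 2 := by rw [hh]; field_simp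
    nlinarith
  -- sup
  set S := G '' Ici T with hS
  have hSne : S.Nonempty := ⟨G T, T, mem_Ici.2 le_rfl, rfl⟩
  have hSb : BddAbove S := ⟨M, by rintro _ ⟨t, ht, rfl⟩; exact hM t ht⟩
  have hlt : sSup S - h * (ε / 2) < sSup S := by have := mul_pos hhpos (half_pos hε); linarith
  obtain ⟨_, ⟨t0, ht0, rfl⟩, hlt0⟩ := exists_lt_of_lt_csSup hSne hlt
  refine ⟨t0, fun t ht => ?_⟩
  have htT : T ≤ t := le_trans ht0 ht
  have hub : G (t + h) ≤ sSup S := le_csSup hSb ⟨t + h, by simp only [mem_Ici]; linarith, rfl⟩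
  have hlb : G t0 ≤ G t := hmono ht0 htT ht
  obtain ⟨c, hc, hce⟩ := exists_hasDerivAt_eq_slope G G' (show t < t + h by linarith)
    (fun x hx => (hG x (htT.trans hx.1)).continuousAt.continuousWithinAt)
    (fun x hx => hG x (htT.trans hx.1.le))
  have hfc : |f t - f c| ≤ K * |t - c| := by
    have := Convex.norm_image_sub_le_of_norm_hasDerivWithin_le (f := f) (f' := f') (C := K)
      (s := Ici T) (x := c) (y := t)
      (fun x hx => (hf x hx).hasDerivWithinAt) (fun x hx => by simpa using hK x hx) (convex_Ici T)
      (by simp only [mem_Ici]; linarith [hc.1]) htT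
    simpa [Real.norm_eq_abs] using this
  have habs : |t - c| ≤ h := by rw [abs_le]; constructor <;> linarith [hc.1, hc.2]
  have h1 : f t - f c ≤ K * h :=
    (le_abs_self _).trans (hfc.trans (mul_le_mul_of_nonneg_left habs hK0))
  have h2 : f c ≤ G' c := hGf c (by linarith [hc.1])
  have h3 : G' c * h = G (t + h) - G t := by
    rw [hce, add_sub_cancel_left]; exact div_mul_cancel₀ _ hhpos.ne'
  have h4 : G' c < ε / 2 := by
    by_contra hcon
    push Not at hcon
    nlinarith [mul_le_mul_of_nonneg_right hcon hhpos.le]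
  rw [Real.dist_eq, sub_zero, abs_of_nonneg (hf0 t htT)]
  linarith

lemma aux_push (x x' : ℝ → ℝ) (T κ q : ℝ) (hκ : 0 < κ)
    (hx : ∀ t, HasDerivAt x (x' t) t) (hpos : ∀ t, 0 < x t) (hq : 0 < q)
    (h : ∀ t, T ≤ t → x t ≤ q → κ * x t ≤ x' t) :
    ∀ᶠ t in atTop, q ≤ x t := by
  have h1 : ∃ t1, T ≤ t1 ∧ q ≤ x t1 := by
    by_contra hcon
    push Not at hcon
    have hd : ∀ t, T ≤ t → κ * x t ≤ x' t := fun t ht => h t ht (hcon t ht).le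
    have hmono : MonotoneOn x (Ici T) := by
      apply monotoneOn_of_deriv_nonneg (convex_Ici T)
      · exact fun t ht => (hx t).continuousAt.continuousWithinAt
      · exact fun t ht => (hx t).differentiableAt.differentiableWithinAt
      · intro t ht
        rw [interior_Ici] at ht
        rw [(hx t).deriv]
        exact (mul_pos hκ (hpos t)).le.trans (hd t (le_of_lt ht))
    have hc : 0 < κ * x T := mul_pos hκ (hpos T)
    set t := T + q / (κ * x T) with ht
    have hlt : T < t := by have := div_pos hq hc; linarith
    obtain ⟨c, hc1, hce⟩ := exists_hasDerivAt_eq_slope x x' hlt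
      (fun y _ => (hx y).continuousAt.continuousWithinAt) (fun y _ => hx y)
    have e1 : x' c * (t - T) = x t - x T := by
      rw [hce]; field_simp [sub_ne_zero.mpr hlt.ne']
    have e2 : κ * x T ≤ x' c :=
      (mul_le_mul_of_nonneg_left (hmono (mem_Ici.2 le_rfl) (mem_Ici.2 hc1.1.le) hc1.1.le)
        hκ.le).trans (hd c hc1.1.le)
    have e3 : (κ * x T) * (t - T) = q := by
      rw [ht, add_sub_cancel_left]; exact mul_div_cancel₀ q hc.ne'
    have e4 := mul_le_mul_of_nonneg_right e2 (sub_nonneg.2 hlt.le)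
    linarith [hcon t hlt.le, hpos T]
  obtain ⟨t1, ht1, hq1⟩ := h1
  filter_upwards [eventually_ge_atTop t1] with t ht
  have := image_le_of_deriv_right_lt_deriv_boundary (f := fun s => - x s) (f' := fun s => - x' s)
    (a := t1) (b := t) (B := fun _ => - q) (B' := fun _ => 0)
    (fun y _ => (hx y).continuousAt.neg.continuousWithinAt)
    (fun y _ => (hx y).neg.hasDerivWithinAt) (by simpa using hq1)
    (fun y => hasDerivAt_const _ _)
    (fun y hy he => by
      have he' : x y = q := by simpa using he
      have := h y (ht1.trans hy.1) he'.le
      have := mul_pos hκ (hpos y)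
      show - x' y < 0
      linarith)
    (right_mem_Icc.2 ht)
  simpa using this

lemma aux_bdV {u v s p P : ℝ} (hu : u ∈ Ioo (0:ℝ) 1) (hv : v ∈ Ioo (0:ℝ) 1)
    (hs : s ∈ Ioo (0:ℝ) 1) (hp : |p| ≤ P) :
    |v * (1 - v) * ((2 * u - 1) * (1 - v + 2 * s * v) + p * ((1 - u + s * u) * v))| ≤ 3 + P := by
  obtain ⟨hu0, hu1⟩ := hu
  obtain ⟨hv0, hv1⟩ := hv
  obtain ⟨hs0, hs1⟩ := hs
  have a1 : |v * (1 - v)| ≤ 1 := by rw [abs_le]; constructor <;> nlinarith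
  have a2 : |2 * u - 1| ≤ 1 := by rw [abs_le]; constructor <;> linarith
  have a3 : |1 - v + 2 * s * v| ≤ 3 := by
    have : s * v < 1 := by nlinarith
    have : 0 < s * v := mul_pos hs0 hv0
    rw [abs_le]; constructor <;> linarith
  have a4 : |(1 - u + s * u) * v| ≤ 1 := by
    have h1 : s * u < u := by nlinarith
    have h2 : 0 < s * u := mul_pos hs0 hu0
    rw [abs_le]; constructor <;> nlinarith
  rw [abs_mul]
  have b1 : |(2 * u - 1) * (1 - v + 2 * s * v)| ≤ 1 * 3 := by rw [abs_mul]; gcongr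
  have b2 : |p * ((1 - u + s * u) * v)| ≤ P * 1 := by
    rw [abs_mul]; have := (abs_nonneg p).trans hp; gcongr
  calc _ ≤ 1 * |(2 * u - 1) * (1 - v + 2 * s * v) + p * ((1 - u + s * u) * v)| := by gcongr
    _ ≤ _ := by have := abs_add_le ((2 * u - 1) * (1 - v + 2 * s * v)) (p * ((1 - u + s * u) * v)); linarith

lemma aux_bdU {a u v s p P : ℝ} (ha : 1 < a) (hu : u ∈ Ioo (0:ℝ) 1) (hv : v ∈ Ioo (0:ℝ) 1)
    (hs : s ∈ Ioo (0:ℝ) 1) (hp : |p| ≤ P) :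
    |u * (1 - u) * ((a - (a + 1) * u) * (1 - v) - (1 + s - p) * ((1 - u + s * u) * v))|
      ≤ a + 2 + P := by
  obtain ⟨hu0, hu1⟩ := hu
  obtain ⟨hv0, hv1⟩ := hv
  obtain ⟨hs0, hs1⟩ := hs
  have hP := (abs_nonneg p).trans hp
  rw [abs_le] at hp
  have a1 : |u * (1 - u)| ≤ 1 := by rw [abs_le]; constructor <;> nlinarith
  have a2 : |a - (a + 1) * u| ≤ a := by rw [abs_le]; constructor <;> nlinarith
  have a3 : |1 - v| ≤ 1 := by rw [abs_le]; constructor <;> linarith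
  have a4 : |(1 - u + s * u) * v| ≤ 1 := by
    have h1 : s * u < u := by nlinarith
    have h2 : 0 < s * u := mul_pos hs0 hu0
    rw [abs_le]; constructor <;> nlinarith
  have a5 : |1 + s - p| ≤ 2 + P := by rw [abs_le]; constructor <;> linarith
  rw [abs_mul]
  have b1 : |(a - (a + 1) * u) * (1 - v)| ≤ a * 1 := by rw [abs_mul]; gcongr
  have b2 : |(1 + s - p) * ((1 - u + s * u) * v)| ≤ (2 + P) * 1 := by
    rw [abs_mul]; gcongr
  calc _ ≤ 1 * |(a - (a + 1) * u) * (1 - v) - (1 + s - p) * ((1 - u + s * u) * v)| := by gcongr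
    _ ≤ _ := by
      have := abs_sub ((a - (a + 1) * u) * (1 - v)) ((1 + s - p) * ((1 - u + s * u) * v))
      linarith

/-- No orbit on which `V` is integrable while `σ` stays away from zero. -/
lemma aux_step1 (a c P M T : ℝ) (ha : 1 < a) (hc : 0 < c) (U V s p G G' : ℝ → ℝ)
    (hU : ∀ t : ℝ, U t ∈ Ioo (0:ℝ) 1) (hV : ∀ t : ℝ, V t ∈ Ioo (0:ℝ) 1)
    (hs : ∀ t : ℝ, s t ∈ Ioo (0:ℝ) 1) (hp : ∀ t, T ≤ t → |p t| ≤ P)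
    (hUode : ∀ t : ℝ, HasDerivAt U
      (U t * (1 - U t) * ((a - (a + 1) * U t) * (1 - V t)
        - (1 + s t - p t) * ((1 - U t + s t * U t) * V t))) t)
    (hVode : ∀ t : ℝ, HasDerivAt V
      (V t * (1 - V t) * ((2 * U t - 1) * (1 - V t + 2 * s t * V t)
        + p t * ((1 - U t + s t * U t) * V t))) t)
    (hG : ∀ t, T ≤ t → HasDerivAt G (G' t) t)
    (hGV : ∀ t, T ≤ t → c * V t ≤ G' t) (hM : ∀ t, T ≤ t → G t ≤ M) : False := by
  have hP0 : 0 ≤ P := (abs_nonneg _).trans (hp T le_rfl)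
  have hcV : Tendsto (fun t => c * V t) atTop (nhds 0) := by
    refine aux_barbalat G G' _ _ T (c * (3 + P)) M hG (fun t _ => (hVode t).const_mul c) ?_ ?_ hGV hM
    · intro t ht
      rw [abs_mul, abs_of_pos hc]
      exact mul_le_mul_of_nonneg_left (aux_bdV (hU t) (hV t) (hs t) (hp t ht)) hc.le
    · intro t _; exact (mul_pos hc (hV t).1).le
  have hV0 : Tendsto V atTop (nhds 0) := by
    have := hcV.const_mul c⁻¹
    simpa [hc.ne'] using this
  -- U eventually above q
  obtain ⟨q, hq1, hq2⟩ : ∃ q, 1 / 2 < q ∧ q < a / (a + 1) :=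
    exists_between (by rw [div_lt_div_iff₀ (by norm_num) (by linarith)]; linarith)
  rw [lt_div_iff₀ (by linarith)] at hq2
  have hqlt1 : q < 1 := by nlinarith
  set d := a - (a + 1) * q with hd
  have hdpos : 0 < d := by rw [hd]; linarith
  have hUq : ∀ᶠ t in atTop, q ≤ U t := by
    have hev : ∀ᶠ t in atTop, V t < d / (2 * (d + 2 + P)) :=
      hV0.eventually (gt_mem_nhds (by positivity))
    obtain ⟨T1, hT1⟩ := eventually_atTop.1 hev
    refine aux_push U _ (max T T1) ((1 - q) * (d / 2)) q (mul_pos (by linarith) (by linarith))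
      hUode (fun t => (hU t).1) (by linarith) ?_
    intro t ht hUt
    have hv := hT1 t ((le_max_right _ _).trans ht)
    have hpt := abs_le.1 (hp t ((le_max_left _ _).trans ht))
    rw [lt_div_iff₀ (by positivity)] at hv
    obtain ⟨hu0, hu1⟩ := hU t
    obtain ⟨hv0, hv1⟩ := hV t
    obtain ⟨hs0, hs1⟩ := hs t
    have hH1 : 1 - U t + s t * U t ≤ 1 := by nlinarith
    have hH0 : 0 ≤ 1 - U t + s t * U t := by nlinarith
    have hH : (1 - U t + s t * U t) * V t ≤ V t := by nlinarith
    have hH' : 0 ≤ (1 - U t + s t * U t) * V t := by positivity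
    have e1 : (1 + s t - p t) * ((1 - U t + s t * U t) * V t) ≤ (2 + P) * V t := by
      apply mul_le_mul <;> linarith
    have e2 : d * (1 - V t) ≤ (a - (a + 1) * U t) * (1 - V t) := by
      apply mul_le_mul_of_nonneg_right _ (by linarith)
      rw [hd]; nlinarith
    have e3 : d / 2 ≤ (a - (a + 1) * U t) * (1 - V t)
        - (1 + s t - p t) * ((1 - U t + s t * U t) * V t) := by nlinarith
    have e4 : U t * (1 - q) ≤ U t * (1 - U t) := by nlinarith
    calc (1 - q) * (d / 2) * U t = (U t * (1 - q)) * (d / 2) := by ring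
      _ ≤ _ := by
        apply mul_le_mul e4 e3 (by positivity)
        nlinarith
  -- V then grows
  set m := 2 * q - 1 with hm
  have hmpos : 0 < m := by rw [hm]; linarith
  have hev : ∀ᶠ t in atTop, V t < m / (2 * (m + P)) :=
      hV0.eventually (gt_mem_nhds (by positivity))
  obtain ⟨T1, hT1⟩ := eventually_atTop.1 (hev.and hUq)
  have hVbig : ∀ᶠ t in atTop, (1 / 2 : ℝ) ≤ V t := by
    refine aux_push V _ (max T T1) ((1 / 2) * (m / 2)) (1 / 2) (by positivity)
      hVode (fun t => (hV t).1) (by norm_num) ?_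
    intro t ht hVt
    obtain ⟨hv, huq⟩ := hT1 t ((le_max_right _ _).trans ht)
    have hpt := abs_le.1 (hp t ((le_max_left _ _).trans ht))
    rw [lt_div_iff₀ (by positivity)] at hv
    obtain ⟨hu0, hu1⟩ := hU t
    obtain ⟨hv0, hv1⟩ := hV t
    obtain ⟨hs0, hs1⟩ := hs t
    have hH1 : 1 - U t + s t * U t ≤ 1 := by nlinarith
    have hH0 : 0 ≤ 1 - U t + s t * U t := by nlinarith
    have hH : (1 - U t + s t * U t) * V t ≤ V t := by nlinarith
    have hH' : 0 ≤ (1 - U t + s t * U t) * V t := by positivity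
    have e1 : - (P * V t) ≤ p t * ((1 - U t + s t * U t) * V t) := by
      have := mul_le_mul_of_nonneg_right hpt.1 hH'
      have := mul_le_mul_of_nonneg_left hH hP0
      linarith
    have e2 : m * (1 - V t) ≤ (2 * U t - 1) * (1 - V t + 2 * s t * V t) := by
      have : 0 < s t * V t := mul_pos hs0 hv0
      apply mul_le_mul <;> linarith
    have e3 : m / 2 ≤ (2 * U t - 1) * (1 - V t + 2 * s t * V t)
        + p t * ((1 - U t + s t * U t) * V t) := by nlinarith
    have e4 : V t * (1 / 2) ≤ V t * (1 - V t) := by nlinarith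
    calc 1 / 2 * (m / 2) * V t = (V t * (1 / 2)) * (m / 2) := by ring
      _ ≤ _ := by
        apply mul_le_mul e4 e3 (by positivity)
        nlinarith
  obtain ⟨t, h1, h2⟩ := (hVbig.and (hV0.eventually (gt_mem_nhds (show (0:ℝ) < 1 / 2 by norm_num)))).exists
  linarith

lemma aux_Ulow {a u v w δ : ℝ} (ha : 1 < a) (hu : u ∈ Ioo (0:ℝ) 1) (hv : v ∈ Ioo (0:ℝ) 1)
    (hδ : 0 < δ) (hvδ : v ≤ 1 - δ)
    (hw : w ≤ (Real.log u - Real.log (1 - u)) + a * (Real.log v - Real.log (1 - v))) :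
    Real.exp (w + a * Real.log δ) * (1 - u) ≤ u := by
  obtain ⟨hu0, hu1⟩ := hu
  obtain ⟨hv0, hv1⟩ := hv
  have h1 : Real.log v ≤ 0 := Real.log_nonpos hv0.le hv1.le
  have h2 : Real.log δ ≤ Real.log (1 - v) := Real.log_le_log hδ (by linarith)
  have h3 : w + a * Real.log δ ≤ Real.log u - Real.log (1 - u) := by nlinarith
  have h4 : 0 < 1 - u := by linarith
  calc Real.exp (w + a * Real.log δ) * (1 - u)
      ≤ Real.exp (Real.log u - Real.log (1 - u)) * (1 - u) := by gcongr
    _ = u := by rw [Real.exp_sub, Real.exp_log hu0, Real.exp_log h4]; field_simp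

lemma aux_step2 (a P T : ℝ) (ha : 1 < a) (U V s p : ℝ → ℝ)
    (hU : ∀ t : ℝ, U t ∈ Ioo (0:ℝ) 1) (hV : ∀ t : ℝ, V t ∈ Ioo (0:ℝ) 1)
    (hs : ∀ t : ℝ, s t ∈ Ioo (0:ℝ) 1) (hp : ∀ t, T ≤ t → p t ≤ P)
    (hps : ∀ t, T ≤ t → 1 + (2 * a + 1) * s t ≤ (a + 1) * p t)
    (hUode : ∀ t : ℝ, HasDerivAt U
      (U t * (1 - U t) * ((a - (a + 1) * U t) * (1 - V t)
        - (1 + s t - p t) * ((1 - U t + s t * U t) * V t))) t)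
    (hVode : ∀ t : ℝ, HasDerivAt V
      (V t * (1 - V t) * ((2 * U t - 1) * (1 - V t + 2 * s t * V t)
        + p t * ((1 - U t + s t * U t) * V t))) t) :
    Tendsto V atTop (nhds 1) := by
  have hp0 : ∀ t, T ≤ t → 0 < p t := by
    intro t ht
    have := hps t ht
    have := mul_pos (show 0 < 2 * a + 1 by linarith) (hs t).1
    by_contra hcon
    push Not at hcon
    nlinarith
  have hpabs : ∀ t, T ≤ t → |p t| ≤ P := fun t ht => by
    rw [abs_of_pos (hp0 t ht)]; exact hp t ht
  set W : ℝ → ℝ := fun t => (Real.log (U t) - Real.log (1 - U t))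
    + a * (Real.log (V t) - Real.log (1 - V t)) with hW
  set W' : ℝ → ℝ := fun t => ((a - (a + 1) * U t) * (1 - V t)
        - (1 + s t - p t) * ((1 - U t + s t * U t) * V t))
    + a * ((2 * U t - 1) * (1 - V t + 2 * s t * V t)
        + p t * ((1 - U t + s t * U t) * V t)) with hW'
  have hWd : ∀ t, HasDerivAt W (W' t) t := by
    intro t
    obtain ⟨hu0, hu1⟩ := hU t
    obtain ⟨hv0, hv1⟩ := hV t
    have hu2 : 1 - U t ≠ 0 := by linarith
    have hv2 : 1 - V t ≠ 0 := by linarith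
    have h := (((hUode t).log hu0.ne').sub (((hUode t).const_sub 1).log hu2)).add
      ((((hVode t).log hv0.ne').sub (((hVode t).const_sub 1).log hv2)).const_mul a)
    have gen : ∀ x y : ℝ, x ≠ 0 → 1 - x ≠ 0 →
        x * (1 - x) * y / x - -(x * (1 - x) * y) / (1 - x) = y := by
      intro x y h1 h2; field_simp; ring
    rw [gen _ _ hu0.ne' hu2, gen _ _ hv0.ne' hv2] at h
    exact h
  have hW'lb : ∀ t, T ≤ t → (a - 1) * (U t * (1 - V t)) ≤ W' t := by
    intro t ht
    obtain ⟨hu0, hu1⟩ := hU t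
    obtain ⟨hv0, hv1⟩ := hV t
    obtain ⟨hs0, hs1⟩ := hs t
    have hH : 0 ≤ (1 - U t + s t * U t) * V t := by
      have := mul_pos hs0 hu0
      apply mul_nonneg <;> linarith
    have h1 := mul_le_mul_of_nonneg_right (hps t ht) hH
    have h2 : 0 ≤ 2 * a * s t * U t * (1 + s t) * V t := by positivity
    simp only [hW']
    nlinarith
  have hf0 : ∀ t, T ≤ t → 0 ≤ (a - 1) * (U t * (1 - V t)) := by
    intro t _
    exact mul_nonneg (by linarith) (mul_nonneg (hU t).1.le (by linarith [(hV t).2]))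
  have hmono : MonotoneOn W (Ici T) := by
    apply monotoneOn_of_deriv_nonneg (convex_Ici T)
    · exact fun t ht => (hWd t).continuousAt.continuousWithinAt
    · exact fun t ht => (hWd t).differentiableAt.differentiableWithinAt
    · intro t ht
      rw [interior_Ici] at ht
      rw [(hWd t).deriv]
      exact (hf0 t (le_of_lt ht)).trans (hW'lb t (le_of_lt ht))
  have key : ∀ δ, 0 < δ → δ < 1 → ∀ᶠ t in atTop, 1 - δ ≤ V t := by
    intro δ hδ hδ1
    by_cases hb : ∃ M, ∀ t, T ≤ t → W t ≤ M
    · obtain ⟨M, hM⟩ := hb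
      have hlim : Tendsto (fun t => (a - 1) * (U t * (1 - V t))) atTop (nhds 0) := by
        refine aux_barbalat W W' _ _ T ((a - 1) * ((a + 2 + P) + (3 + P))) M (fun t _ => hWd t)
          (fun t _ => (((hUode t).mul ((hVode t).const_sub 1)).const_mul (a - 1))) ?_ hf0 hW'lb hM
        intro t ht
        rw [abs_mul, abs_of_pos (show 0 < a - 1 by linarith)]
        apply mul_le_mul_of_nonneg_left _ (by linarith)
        have b1 := aux_bdU ha (hU t) (hV t) (hs t) (hpabs t ht)
        have b2 := aux_bdV (hU t) (hV t) (hs t) (hpabs t ht)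
        refine (abs_add_le _ _).trans (add_le_add ?_ ?_)
        · rw [abs_mul]
          have : |1 - V t| ≤ 1 := by
            rw [abs_le]; constructor <;> linarith [(hV t).1, (hV t).2]
          exact (mul_le_of_le_one_right (abs_nonneg _) this).trans b1
        · rw [abs_mul, abs_neg]
          have : |U t| ≤ 1 := by
            rw [abs_le]; constructor <;> linarith [(hU t).1, (hU t).2]
          exact (mul_le_of_le_one_left (abs_nonneg _) this).trans b2
      set r := Real.exp (W T + a * Real.log δ) with hr
      have hrpos : 0 < r := Real.exp_pos _
      have ha1 : 0 < a - 1 := by linarith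
      filter_upwards [hlim.eventually (gt_mem_nhds
        (show (0:ℝ) < (a - 1) * (r / (1 + r) * δ) by positivity)), eventually_ge_atTop T] with t h1 h2
      by_contra hcon
      push Not at hcon
      have h3 := aux_Ulow ha (hU t) (hV t) hδ hcon.le (hmono (mem_Ici.2 le_rfl) (mem_Ici.2 h2) h2)
      rw [← hr] at h3
      have h4 : r / (1 + r) ≤ U t := by
        rw [div_le_iff₀ (by positivity)]; linarith
      have h5 : r / (1 + r) * δ ≤ U t * (1 - V t) :=
        mul_le_mul h4 (by linarith) hδ.le (hU t).1.le
      have h6 := mul_le_mul_of_nonneg_left h5 ha1.le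
      linarith
    · push Not at hb
      obtain ⟨T1, hT1, hWT1⟩ := hb (Real.log 3 - a * Real.log δ)
      refine aux_push V _ T1 (δ * (δ / 2)) (1 - δ) (by positivity)
        hVode (fun t => (hV t).1) (by linarith) ?_
      intro t ht hVt
      have hTt := hT1.trans ht
      have h3 := aux_Ulow ha (hU t) (hV t) hδ hVt
        (hWT1.le.trans (hmono (mem_Ici.2 hT1) (mem_Ici.2 hTt) ht))
      rw [sub_add_cancel, Real.exp_log (by norm_num)] at h3
      obtain ⟨hu0, hu1⟩ := hU t
      obtain ⟨hv0, hv1⟩ := hV t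
      obtain ⟨hs0, hs1⟩ := hs t
      have hsv := mul_pos hs0 hv0
      have hsu := mul_pos hs0 hu0
      have e1 : (1 / 2) * δ ≤ (2 * U t - 1) * (1 - V t + 2 * s t * V t) := by
        apply mul_le_mul <;> linarith
      have e2 : 0 ≤ p t * ((1 - U t + s t * U t) * V t) :=
        mul_nonneg (hp0 t hTt).le (mul_nonneg (by linarith) hv0.le)
      calc δ * (δ / 2) * V t = (V t * δ) * (δ / 2) := by ring
        _ ≤ _ := by
          apply mul_le_mul
          · exact mul_le_mul_of_nonneg_left (by linarith) hv0.le
          · linarith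
          · positivity
          · exact mul_nonneg hv0.le (by linarith)
  rw [Metric.tendsto_atTop]
  intro ε hε
  have hm : 0 < min (ε / 2) (1 / 2) := by positivity
  obtain ⟨N, hN⟩ := eventually_atTop.1 (key (min (ε / 2) (1 / 2)) hm
    (lt_of_le_of_lt (min_le_right _ _) (by norm_num)))
  refine ⟨N, fun t ht => ?_⟩
  have h1 := hN t ht
  have h2 := min_le_left (ε / 2) (1 / 2)
  rw [Real.dist_eq, abs_lt]
  constructor <;> linarith [(hV t).2]

/-- If `σ' ≥ 1/(4+2l) + ((7+4l)/(4+2l))σ` on some `(0,η̂]`, then every interior orbit of the Einstein–Vlasov dynamical system satisfies `Ω → 0` and `V → 1` as `λ → +∞`. -/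
theorem stmt3
    (l : ℝ) (hl : -1 < l)
    (σ σ' : ℝ → ℝ)
    (hσderiv : ∀ η : ℝ, 0 < η → HasDerivAt σ (σ' η) η)
    (hσ'cont : ContinuousOn σ' (Ioi 0))
    (hσrange : ∀ η : ℝ, 0 < η → σ η ∈ Ioo 0 (1 / (3 + 2 * l)))
    (hσ0 : Tendsto σ (nhdsWithin 0 (Ioi 0)) (nhds 0))
    (k₁ k₂ : ℝ) (hk₁ : 0 < k₁) (hk₁₂ : k₁ < k₂)
    (hσ'near : ∃ η₀ > (0:ℝ), ∀ η ∈ Ioo (0:ℝ) η₀, σ' η ∈ Ioo k₁ k₂)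
    (ω ω' : ℝ → ℝ)
    (hωsmooth : ContDiffOn ℝ (⊤ : ℕ∞) ω (Ioi 0))
    (hωderiv : ∀ η : ℝ, 0 < η → HasDerivAt ω (ω' η) η)
    (hωpos : ∀ η : ℝ, 0 < η → 0 < ω η)
    (hωmono : StrictMonoOn ω (Ioi 0))
    (hω0 : Tendsto ω (nhdsWithin 0 (Ioi 0)) (nhds 0))
    (F : ℝ → ℝ) (hFdef : ∀ η : ℝ, 0 < η → F η = σ η * (ω' η / ω η))
    (Flo Fhi : ℝ) (hFlo : 0 < Flo)
    (hFbounds : ∀ η : ℝ, 0 < η → F η ∈ Icc Flo Fhi)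
    (U V E Ω : ℝ → ℝ)
    (hΩdef : ∀ t : ℝ, Ω t = ω (E t) / (1 + ω (E t)))
    (hU : ∀ t : ℝ, U t ∈ Ioo (0:ℝ) 1) (hV : ∀ t : ℝ, V t ∈ Ioo (0:ℝ) 1)
    (hE : ∀ t : ℝ, 0 < E t) (hEcont : Continuous E)
    (hUode : ∀ t : ℝ, HasDerivAt U
      (U t * (1 - U t) * ((3 + 2 * l - (4 + 2 * l) * U t) * (1 - V t)
        - (1 + σ (E t) - σ' (E t)) * ((1 - U t + σ (E t) * U t) * V t))) t)
    (hVode : ∀ t : ℝ, HasDerivAt V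
      (V t * (1 - V t) * ((2 * U t - 1) * (1 - V t + 2 * σ (E t) * V t)
        + σ' (E t) * ((1 - U t + σ (E t) * U t) * V t))) t)
    (hΩode : ∀ t : ℝ, HasDerivAt Ω
      (-(Ω t * (1 - Ω t) * F (E t) * ((1 - U t + σ (E t) * U t) * V t))) t)
    (ηhat : ℝ) (hηhat : 0 < ηhat)
    (hmain : ∀ η : ℝ, 0 < η → η ≤ ηhat →
      1 / (4 + 2 * l) + (7 + 4 * l) / (4 + 2 * l) * σ η ≤ σ' η) :
    Tendsto Ω atTop (nhds 0) ∧ Tendsto V atTop (nhds 1) := by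
  have ha : (1:ℝ) < 3 + 2 * l := by linarith
  have hs1 : ∀ η : ℝ, 0 < η → σ η ∈ Ioo (0:ℝ) 1 := by
    intro η hη
    refine ⟨(hσrange η hη).1, (hσrange η hη).2.trans ?_⟩
    rw [div_lt_one (by linarith)]
    exact ha
  have h4 : (4 + 2 * l) = (3 + 2 * l) + 1 := by ring
  rw [h4] at hmain
  simp only [h4] at hUode
  have hωE : ∀ t, 0 < ω (E t) := fun t => hωpos _ (hE t)
  have hΩ01 : ∀ t, Ω t ∈ Ioo (0:ℝ) 1 := by
    intro t
    have := hωE t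
    rw [hΩdef]
    exact ⟨by positivity, by rw [div_lt_one (by linarith)]; linarith⟩
  -- comparison of Ω with E
  have hcomp : ∀ t η, 0 < η → (ω η / (1 + ω η) ≤ Ω t ↔ η ≤ E t) := by
    intro t η hη
    rw [hΩdef, div_le_div_iff₀ (by linarith [hωpos η hη]) (by linarith [hωE t]),
      ← hωmono.le_iff_le (mem_Ioi.2 hη) (mem_Ioi.2 (hE t))]
    constructor <;> intro h <;> nlinarith
  have hH0 : ∀ t, σ (E t) * V t ≤ (1 - U t + σ (E t) * U t) * V t := by
    intro t
    obtain ⟨hs0, hs2⟩ := hs1 _ (hE t)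
    apply mul_le_mul_of_nonneg_right _ (hV t).1.le
    nlinarith [(hU t).1, (hU t).2]
  have hanti : Antitone Ω := by
    apply antitone_of_deriv_nonpos (fun t => (hΩode t).differentiableAt)
    intro t
    rw [(hΩode t).deriv]
    have hF : 0 < F (E t) := lt_of_lt_of_le hFlo (hFbounds _ (hE t)).1
    have := mul_pos (hs1 _ (hE t)).1 (hV t).1
    have hH : 0 < (1 - U t + σ (E t) * U t) * V t := lt_of_lt_of_le this (hH0 t)
    have h1 := (hΩ01 t).1
    have h2 : 0 < 1 - Ω t := by linarith [(hΩ01 t).2]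
    have : 0 < Ω t * (1 - Ω t) * F (E t) * ((1 - U t + σ (E t) * U t) * V t) := by positivity
    linarith
  have hsmall : ∀ η, 0 < η → ∃ t, E t < η := by
    intro η hη
    by_contra hcon
    push Not at hcon
    have hEle : ∀ t, 0 ≤ t → E t ≤ E 0 := by
      intro t ht
      have h1 := hanti ht
      have h2 := (hcomp 0 (E t) (hE t)).1 (by rw [← hΩdef]; exact h1)
      exact h2
    have hpos : ∀ x ∈ Icc η (E 0), 0 < x := fun x hx => lt_of_lt_of_le hη hx.1
    have hmem : ∀ t, 0 ≤ t → E t ∈ Icc η (E 0) := fun t ht => ⟨hcon t, hEle t ht⟩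
    have hne : (Icc η (E 0)).Nonempty := ⟨E 0, hmem 0 le_rfl⟩
    obtain ⟨x0, hx0, hmin⟩ := isCompact_Icc.exists_isMinOn hne
      (f := σ) (fun x hx => (hσderiv x (hpos x hx)).continuousAt.continuousWithinAt)
    obtain ⟨x1, hx1, hmax⟩ := isCompact_Icc.exists_isMaxOn hne
      (f := fun x => |σ' x|) ((hσ'cont.mono hpos).abs)
    have hs0 : 0 < σ x0 := (hs1 x0 (hpos x0 hx0)).1
    set c := ω η / (1 + ω η) with hc
    have hc0 : 0 < c := by have := hωpos η hη; positivity
    have h10 : 0 < 1 - Ω 0 := by linarith [(hΩ01 0).2]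
    refine aux_step1 (3 + 2 * l) (c * (1 - Ω 0) * Flo * σ x0) |σ' x1| 0 0 ha (by positivity) U V
      (fun t => σ (E t)) (fun t => σ' (E t)) (fun t => - Ω t)
      (fun t => (Ω t * (1 - Ω t) * F (E t) * ((1 - U t + σ (E t) * U t) * V t)))
      hU hV (fun t => hs1 _ (hE t)) (fun t ht => hmax (hmem t ht)) hUode hVode
      (fun t _ => by have h := (hΩode t).neg; rw [neg_neg] at h; exact h) ?_ ?_
    · intro t ht
      have q1 : c ≤ Ω t := (hcomp t η hη).2 (hcon t)
      have q2 : 1 - Ω 0 ≤ 1 - Ω t := by linarith [hanti ht]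
      have q3 := (hFbounds _ (hE t)).1
      have q4 : σ x0 ≤ σ (E t) := hmin (hmem t ht)
      have q5 : σ x0 * V t ≤ (1 - U t + σ (E t) * U t) * V t :=
        (mul_le_mul_of_nonneg_right q4 (hV t).1.le).trans (hH0 t)
      have hv := (hV t).1
      have h1 := (hΩ01 t).1
      have h2 : 0 < 1 - Ω t := by linarith
      have h3 : 0 < F (E t) := lt_of_lt_of_le hFlo q3
      rw [mul_assoc (c * (1 - Ω 0) * Flo)]
      show _ ≤ Ω t * (1 - Ω t) * F (E t) * ((1 - U t + σ (E t) * U t) * V t)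
      gcongr
    · intro t _
      show - Ω t ≤ 0
      linarith [(hΩ01 t).1]
  have hEsmall : ∀ η, 0 < η → ∀ᶠ t in atTop, E t < η := by
    intro η hη
    obtain ⟨t0, ht0⟩ := hsmall η hη
    filter_upwards [eventually_ge_atTop t0] with t ht
    rw [← not_le, ← hcomp t η hη]
    rw [← not_le, ← hcomp t0 η hη] at ht0
    exact fun h => ht0 (h.trans (hanti ht))
  constructor
  · rw [Metric.tendsto_nhds]
    intro ε hε
    have h1 := hω0.eventually (gt_mem_nhds hε)
    obtain ⟨η, h2, h3⟩ := (h1.and self_mem_nhdsWithin).exists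
    have hη : 0 < η := h3
    filter_upwards [hEsmall η hη] with t ht
    rw [← not_le, ← hcomp t η hη, not_le] at ht
    have := hωpos η hη
    have h5 : ω η / (1 + ω η) ≤ ω η := div_le_self this.le (by linarith)
    rw [Real.dist_eq, sub_zero, abs_of_pos (hΩ01 t).1]
    linarith
  · obtain ⟨η₀, hη₀, hnear⟩ := hσ'near
    obtain ⟨T, hT⟩ := eventually_atTop.1 ((hEsmall η₀ hη₀).and (hEsmall ηhat hηhat))
    refine aux_step2 (3 + 2 * l) k₂ T ha U V (fun t => σ (E t)) (fun t => σ' (E t)) hU hV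
      (fun t => hs1 _ (hE t)) (fun t ht => (hnear _ ⟨hE t, (hT t ht).1⟩).2.le) ?_ hUode hVode
    intro t ht
    have h1 := hmain (E t) (hE t) (hT t ht).2.le
    have h5 : (0:ℝ) < 3 + 2 * l + 1 := by linarith
    have h2 := mul_le_mul_of_nonneg_left h1 h5.le
    have h3 : (3 + 2 * l + 1) * (1 / (3 + 2 * l + 1) + (7 + 4 * l) / (3 + 2 * l + 1) * σ (E t))
        = 1 + (7 + 4 * l) * σ (E t) := by field_simp
    rw [h3] at h2
    show 1 + (2 * (3 + 2 * l) + 1) * σ (E t) ≤ (3 + 2 * l + 1) * σ' (E t)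
    linarith
end

section
/- Let k = 3 + 2l + 1/2 if l ≥ −3/4 and k = 2 if −1 < l < −3/4. Suppose there exists η̌ > 0 such that σ'(η) ≥ 1/(2(3+2l)) + k·σ(η) for all 0 < η ≤ η̌, and let Ω̌ be the value of Ω corresponding to η̌. Let γ be an interior orbit of the Einstein–Vlasov dynamical system such that, as λ → −∞, (U,V,Ω)(λ) converges either to (1, 0, Ω₀) or to ((3+2l)/(4+2l), 0, Ω₀) for some Ω₀ ≤ Ω̌. Then Ω(λ) → 0 and V(λ) → 1 as λ → +∞; that is, the ω-limit set of γ lies in {Ω = 0} ∩ {V = 1}. -/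
open Filter Set

/-- The quantity driving the flow through the line `u + q/2 = a`. -/
lemma G_pos (a k S R u : ℝ) (ha : 1 < a) (hS : 0 < S) (hk2 : 2 ≤ k) (hka : a + 1/2 ≤ k)
    (hR : 1 / (2 * a) + k * S ≤ R) (hu : 0 < u) (hua : u ≤ a) :
    0 < -(1/2) + a * R * (1 + S * u) - S * u - S * u^2 - S^2 * u^2 + 2 * S * (u - 1) * (a - u) := by
  have h1 : 1/2 + a * k * S ≤ a * R := by
    have := mul_le_mul_of_nonneg_left hR (by linarith : (0:ℝ) ≤ a)
    have e : a * (1 / (2 * a) + k * S) = 1/2 + a * k * S := by field_simp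
    linarith
  have h2 : (1/2 + a * k * S) * (1 + S * u) ≤ a * R * (1 + S * u) :=
    mul_le_mul_of_nonneg_right h1 (by positivity)
  have h3 : 0 ≤ a * k - 2 * a + (3/2 + 2 * a) * u - 3 * u^2 := by
    have e1 : 0 ≤ (a - u) * (k - 2) := mul_nonneg (by linarith) (by linarith)
    have e2 : 0 ≤ u * (k - a - 1/2) := mul_nonneg (by linarith) (by linarith)
    have e3 : 0 ≤ u * (a - u) := mul_nonneg (by linarith) (by linarith)
    nlinarith
  have h4 : 0 < u * (a * k - u) := by
    apply mul_pos hu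
    nlinarith
  have h5 : 0 ≤ S * (a * k - 2 * a + (3/2 + 2 * a) * u - 3 * u^2) := mul_nonneg hS.le h3
  have h6 : 0 < S^2 * (u * (a * k - u)) := by positivity
  nlinarith

lemma w_ident (a S R u q : ℝ) :
    u * (a - u - (1 + S - R) * (1 + S * u) * q)
      + q * ((u - 1) * (1 + 2 * S * q) + R * (1 + S * u) * q) / 2
    = (u + q / 2 - a) * (-u + q * (R * (1 + S * u) + 2 * S * (u - 1)))
      + q * (-(1/2) + a * R * (1 + S * u) - S * u - S * u^2 - S^2 * u^2
        + 2 * S * (u - 1) * (a - u)) := by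
  ring

lemma hasDeriv_odds (U : ℝ → ℝ) (X t : ℝ) (h1 : U t < 1)
    (h : HasDerivAt U (U t * (1 - U t) * X) t) :
    HasDerivAt (fun t => U t / (1 - U t)) (U t / (1 - U t) * X) t := by
  have hne : 1 - U t ≠ 0 := by linarith
  refine (h.div (h.const_sub 1) hne).congr_deriv ?_
  field_simp
  ring

/-- derivative of `w = u + q/2 - a`. -/
lemma w_deriv (a S R : ℝ) (U V : ℝ → ℝ) (t : ℝ) (hU1 : U t < 1) (hV1 : V t < 1)
    (hUode : HasDerivAt U
      (U t * (1 - U t) * ((a - (a + 1) * U t) * (1 - V t)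
        - (1 + S - R) * ((1 - U t + S * U t) * V t))) t)
    (hVode : HasDerivAt V
      (V t * (1 - V t) * ((2 * U t - 1) * (1 - V t + 2 * S * V t)
        + R * ((1 - U t + S * U t) * V t))) t) :
    HasDerivAt (fun t => U t / (1 - U t) + V t / (1 - V t) / 2 - a)
      ((1 - U t) * (1 - V t) * (
        (U t / (1 - U t) + V t / (1 - V t) / 2 - a) *
          (-(U t / (1 - U t)) + V t / (1 - V t) * (R * (1 + S * (U t / (1 - U t)))
            + 2 * S * ((U t / (1 - U t)) - 1)))
        + V t / (1 - V t) * (-(1/2) + a * R * (1 + S * (U t / (1 - U t))) - S * (U t / (1 - U t))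
          - S * (U t / (1 - U t))^2 - S^2 * (U t / (1 - U t))^2
          + 2 * S * ((U t / (1 - U t)) - 1) * (a - (U t / (1 - U t)))))) t := by
  have h1 := hasDeriv_odds U _ t hU1 hUode
  have h2 := hasDeriv_odds V _ t hV1 hVode
  have := (h1.add (h2.div_const 2)).sub_const a
  refine this.congr_deriv ?_
  rw [← w_ident]
  have e1 : 1 - U t ≠ 0 := by linarith
  have e2 : 1 - V t ≠ 0 := by linarith
  field_simp
  ring

/-- backward argument -/
lemma pos_of_atBot (w w' : ℝ → ℝ) (T : ℝ) (hd : ∀ t, HasDerivAt w (w' t) t)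
    (hw : ∀ t ≤ T, w t ≤ 0 → 0 < w' t) (hlim : Tendsto w atBot (nhds 0)) : 0 < w T := by
  by_contra hneg
  push Not at hneg
  have hc : Continuous w := continuous_iff_continuousAt.2 fun t => (hd t).continuousAt
  have hT := hw T le_rfl hneg
  obtain ⟨t1, ht1, ht1'⟩ : ∃ t1 < T, w t1 < w T := by
    by_contra hcon
    push Not at hcon
    have : w' T ≤ 0 := by
      have h1 := (hd T).hasDerivWithinAt (s := Iio T)
      rw [hasDerivWithinAt_iff_tendsto_slope' (by simp)] at h1
      refine le_of_tendsto h1 ?_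
      filter_upwards [self_mem_nhdsWithin] with x hx
      rw [slope_def_field]
      exact div_nonpos_of_nonneg_of_nonpos (by linarith [hcon x hx]) (by linarith [mem_Iio.1 hx])
    linarith
  have h2 : ∀ᶠ t in atBot, w t1 < w t := hlim.eventually (lt_mem_nhds (by linarith))
  obtain ⟨t2, h3, h4⟩ := (h2.and (eventually_lt_atBot t1)).exists
  obtain ⟨x, hx, hmin⟩ := isCompact_Icc.exists_isMinOn (s := Icc t2 T)
    ⟨t1, h4.le, ht1.le⟩ hc.continuousOn
  have hx1 : w x ≤ w t1 := hmin ⟨h4.le, ht1.le⟩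
  have hxa : t2 < x := lt_of_le_of_ne hx.1 (by rintro rfl; linarith)
  have hxb : x < T := lt_of_le_of_ne hx.2 (by rintro rfl; linarith)
  have : IsLocalMin w x := hmin.isLocalMin (Icc_mem_nhds hxa hxb)
  have := this.hasDerivAt_eq_zero (hd x)
  have := hw x hx.2 (by linarith)
  linarith

/-- forward argument -/
lemma pos_forward (w w' : ℝ → ℝ) (T : ℝ) (hd : ∀ t, HasDerivAt w (w' t) t)
    (hw : ∀ t, w t = 0 → 0 < w' t) (hT : 0 < w T) : ∀ t ≥ T, 0 < w t := by
  intro t ht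
  by_contra hneg
  push Not at hneg
  have hc : Continuous w := continuous_iff_continuousAt.2 fun t => (hd t).continuousAt
  have hcomp : IsCompact (Icc T t ∩ w ⁻¹' Iic 0) :=
    isCompact_Icc.inter_right (isClosed_Iic.preimage hc)
  obtain ⟨x, ⟨hx, hx0⟩, hxl⟩ := hcomp.exists_isLeast ⟨t, ⟨ht, le_rfl⟩, hneg⟩
  have hx0 : w x ≤ 0 := hx0
  have hTx : T < x := lt_of_le_of_ne hx.1 (by rintro rfl; linarith)
  have hpos : ∀ y ∈ Ico T x, 0 < w y := by
    intro y hy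
    by_contra hcon
    have := hxl ⟨⟨hy.1, hy.2.le.trans hx.2⟩, not_lt.1 hcon⟩
    linarith [hy.2]
  have hev : ∀ᶠ y in nhdsWithin x (Iio x), 0 < w y := by
    filter_upwards [Ico_mem_nhdsLT hTx] with y hy using hpos y hy
  have hx0' : 0 ≤ w x :=
    ge_of_tendsto (hc.continuousAt.tendsto.mono_left nhdsWithin_le_nhds)
      (hev.mono fun y hy => hy.le)
  have h0 : w x = 0 := le_antisymm hx0 hx0'
  have h1 := (hd x).hasDerivWithinAt (s := Iio x)
  rw [hasDerivWithinAt_iff_tendsto_slope' (by simp)] at h1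
  have : w' x ≤ 0 := by
    refine le_of_tendsto h1 ?_
    filter_upwards [self_mem_nhdsWithin, hev] with y hy hy'
    rw [slope_def_field]
    exact div_nonpos_of_nonneg_of_nonpos (by linarith) (by linarith [mem_Iio.1 hy])
  linarith [hw x h0]

/-- A function with derivative bounded below by a positive constant is unbounded above. -/
lemma unbounded_of_deriv (f f' : ℝ → ℝ) (T c M : ℝ) (hc : 0 < c)
    (hd : ∀ t, HasDerivAt f (f' t) t) (h : ∀ t ≥ T, c ≤ f' t) (hM : ∀ t ≥ T, f t ≤ M) : False := by
  have hmono : MonotoneOn (fun t => f t - c * t) (Ici T) := by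
    have hd' : ∀ t, HasDerivAt (fun t => f t - c * t) (f' t - c) t := fun t =>
      ((hd t).sub ((hasDerivAt_id t).const_mul c)).congr_deriv (by simp)
    apply monotoneOn_of_deriv_nonneg (convex_Ici T)
    · exact fun t _ => (hd' t).continuousAt.continuousWithinAt
    · exact fun t _ => (hd' t).differentiableAt.differentiableWithinAt
    · intro t ht
      rw [interior_Ici] at ht
      rw [(hd' t).deriv]
      linarith [h t (le_of_lt ht)]
  set s := T + (M - f T + 1) / c with hs
  have hMT := hM T le_rfl
  have hTs : T ≤ s := by
    have : 0 ≤ (M - f T + 1) / c := div_nonneg (by linarith) hc.le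
    linarith
  have h1 := hmono (mem_Ici.2 le_rfl) (mem_Ici.2 hTs) hTs
  have h2 : c * s = c * T + (M - f T + 1) := by rw [hs]; field_simp
  have h3 := hM s hTs
  simp only at h1
  linarith

/-- Lower bound for the `V` bracket when `U < 1/2`. -/
lemma B_low (a k S R U V : ℝ) (ha : 1 < a) (hS : 0 < S) (hk2 : 2 ≤ k)
    (hR : 1 / (2 * a) + k * S ≤ R) (hU0 : 0 < U) (hU : U < 1/2) (hV0 : 0 < V) (hV1 : V < 1)
    (hw : 0 < U / (1 - U) + V / (1 - V) / 2 - a) :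
    U * (1 - V) * (1 - 1 / a) ≤ (2 * U - 1) * (1 - V + 2 * S * V)
        + R * ((1 - U + S * U) * V) := by
  have e1 : 0 < 1 - U := by linarith
  have e2 : 0 < 1 - V := by linarith
  have hw2 : 0 < U * (1 - V) + V * (1 - U) / 2 - a * ((1 - U) * (1 - V)) := by
    have := mul_pos hw (mul_pos e1 e2)
    have e : (U / (1 - U) + V / (1 - V) / 2 - a) * ((1 - U) * (1 - V))
      = U * (1 - V) + V * (1 - U) / 2 - a * ((1 - U) * (1 - V)) := by field_simp
    linarith
  have hw3 : 0 < U * (1 - V) / a + V * (1 - U) / (2 * a) - ((1 - U) * (1 - V)) := by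
    have := div_pos hw2 (by linarith : (0:ℝ) < a)
    have e : (U * (1 - V) + V * (1 - U) / 2 - a * ((1 - U) * (1 - V))) / a
      = U * (1 - V) / a + V * (1 - U) / (2 * a) - ((1 - U) * (1 - V)) := by field_simp
    linarith
  have hb : 0 < 1 / (2 * a) := by positivity
  have h1 : (1 / (2 * a) + 2 * S) * ((1 - U) * V) ≤ R * ((1 - U + S * U) * V) := by
    have h2 : (1 / (2 * a) + 2 * S) ≤ R := by nlinarith
    apply mul_le_mul h2 _ (by positivity) (by nlinarith)
    apply mul_le_mul_of_nonneg_right _ hV0.le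
    nlinarith
  have h3 : V * (1 - U) / (2 * a) = 1 / (2 * a) * ((1 - U) * V) := by ring
  have h4 : U * (1 - V) / a = U * (1 - V) * (1 / a) := by ring
  have h5 : 0 < S * V * U := by positivity
  nlinarith

/-- Lower bound for the `V` bracket when `1/2 ≤ U`. -/
lemma B_high (a k S R U V : ℝ) (ha : 1 < a) (hS : 0 < S) (hk2 : 2 ≤ k)
    (hR : 1 / (2 * a) + k * S ≤ R) (hU : 1/2 ≤ U) (hU1 : U < 1) (hV0 : 0 < V) (hV1 : V < 1) :
    (2 * U - 1) * (1 - V) + (1 - U) * V / (2 * a) ≤ (2 * U - 1) * (1 - V + 2 * S * V)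
        + R * ((1 - U + S * U) * V) := by
  have e1 : 0 < 1 - U := by linarith
  have hb : 0 < 1 / (2 * a) := by positivity
  have h1 : (1 / (2 * a)) * ((1 - U) * V) ≤ R * ((1 - U + S * U) * V) := by
    have h2 : (1 / (2 * a)) ≤ R := by nlinarith
    apply mul_le_mul h2 _ (by positivity) (by linarith)
    apply mul_le_mul_of_nonneg_right _ hV0.le
    nlinarith
  have h3 : (1 - U) * V / (2 * a) = 1 / (2 * a) * ((1 - U) * V) := by ring
  have h4 : 0 ≤ (2 * U - 1) * (2 * S * V) := mul_nonneg (by linarith) (by positivity)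
  nlinarith

lemma tendsto_odds (U : ℝ → ℝ) (f : Filter ℝ) (x y : ℝ) (hx : 1 - x ≠ 0) (hy : x / (1 - x) = y)
    (h : Tendsto U f (nhds x)) : Tendsto (fun t => U t / (1 - U t)) f (nhds y) := by
  rw [← hy]
  exact h.div (h.const_sub 1) hx

lemma w_pos (a k K : ℝ) (S R U V : ℝ → ℝ) (ha : 1 < a) (hk2 : 2 ≤ k) (hka : a + 1/2 ≤ k)
    (hS : ∀ t, 0 < S t) (hS1 : ∀ t, S t < 1)
    (hR : ∀ t, 1 / (2 * a) + k * S t ≤ R t) (hK : ∀ t ≤ 0, R t ≤ K)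
    (hU : ∀ t : ℝ, U t ∈ Ioo (0:ℝ) 1) (hV : ∀ t : ℝ, V t ∈ Ioo (0:ℝ) 1)
    (hUode : ∀ t : ℝ, HasDerivAt U
      (U t * (1 - U t) * ((a - (a + 1) * U t) * (1 - V t)
        - (1 + S t - R t) * ((1 - U t + S t * U t) * V t))) t)
    (hVode : ∀ t : ℝ, HasDerivAt V
      (V t * (1 - V t) * ((2 * U t - 1) * (1 - V t + 2 * S t * V t)
        + R t * ((1 - U t + S t * U t) * V t))) t)
    (hVlim : Tendsto V atBot (nhds 0))
    (hUlim : Tendsto U atBot (nhds 1) ∨ Tendsto U atBot (nhds (a / (a + 1)))) :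
    ∀ t, 0 < U t / (1 - U t) + V t / (1 - V t) / 2 - a := by
  have hd := fun t => w_deriv a (S t) (R t) U V t (hU t).2 (hV t).2 (hUode t) (hVode t)
  have hupos : ∀ t, 0 < U t / (1 - U t) := fun t =>
    div_pos (hU t).1 (by linarith [(hU t).2])
  have hqpos : ∀ t, 0 < V t / (1 - V t) := fun t =>
    div_pos (hV t).1 (by linarith [(hV t).2])
  have hmpos : ∀ t, 0 < (1 - U t) * (1 - V t) := fun t =>
    mul_pos (by linarith [(hU t).2]) (by linarith [(hV t).2])
  -- positivity of the transversal term
  have hG := fun t (h : U t / (1 - U t) ≤ a) =>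
    mul_pos (hqpos t) (G_pos a k (S t) (R t) (U t / (1 - U t)) ha (hS t) hk2 hka (hR t) (hupos t) h)
  have hforward : ∀ T, 0 < U T / (1 - U T) + V T / (1 - V T) / 2 - a →
      ∀ t ≥ T, 0 < U t / (1 - U t) + V t / (1 - V t) / 2 - a := by
    intro T hT
    apply pos_forward _ _ T hd _ hT
    intro t h0
    apply mul_pos (hmpos t)
    rw [h0, zero_mul, zero_add]
    exact hG t (by linarith [hqpos t])
  have hq0 : Tendsto (fun t => V t / (1 - V t)) atBot (nhds 0) := by
    exact tendsto_odds V _ 0 0 (by norm_num) (by norm_num) hVlim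
  have hmany : ∃ T0, ∀ T ≤ T0, 0 < U T / (1 - U T) + V T / (1 - V T) / 2 - a := by
    rcases hUlim with h | h
    · have h1 : a / (a + 1) < 1 := by rw [div_lt_one (by linarith)]; linarith
      obtain ⟨T0, hT0⟩ := eventually_atBot.1 (h.eventually (lt_mem_nhds h1))
      refine ⟨T0, fun T hT => ?_⟩
      have h2 := hT0 T hT
      have h3 : a < U T / (1 - U T) := by
        rw [lt_div_iff₀ (by linarith [(hU T).2])]
        rw [div_lt_iff₀ (by linarith)] at h2
        linarith
      linarith [hqpos T]
    · have hu : Tendsto (fun t => U t / (1 - U t)) atBot (nhds a) := by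
        have e : 1 - a / (a + 1) = 1 / (a + 1) := by field_simp; ring
        exact tendsto_odds U _ _ a (by rw [e]; positivity) (by rw [e]; field_simp) h
      have hw0 : Tendsto (fun t => U t / (1 - U t) + V t / (1 - V t) / 2 - a) atBot (nhds 0) := by
        have := (hu.add (hq0.div_const 2)).sub_const a
        simpa using this
      have hK0 : 0 ≤ K := by
        have h1 := hK 0 le_rfl
        have h2 := hR 0
        have h3 : 0 < 1 / (2 * a) := by positivity
        have h4 : 0 < k * S 0 := mul_pos (by linarith) (hS 0)
        linarith
      have hev : ∀ᶠ t in atBot, U t / (1 - U t) < a + 1 ∧ 1 < U t / (1 - U t) ∧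
          V t / (1 - V t) < 1 / (K * (a + 2) + 2 * a) ∧ t ≤ 0 := by
        refine ((hu.eventually (gt_mem_nhds (by linarith))).and
          ((hu.eventually (lt_mem_nhds ha)).and
          ((hq0.eventually (gt_mem_nhds (by positivity))).and (eventually_le_atBot 0))))
      obtain ⟨T0, hT0⟩ := eventually_atBot.1 hev
      refine ⟨T0, fun T hT => ?_⟩
      refine pos_of_atBot _ _ T hd ?_ hw0
      intro t ht hw
      obtain ⟨b1, b2, b3, b4⟩ := hT0 t (ht.trans hT)
      have hg := hG t (by linarith [hqpos t])
      apply mul_pos (hmpos t)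
      refine add_pos_of_nonneg_of_pos ?_ hg
      apply mul_nonneg_of_nonpos_of_nonpos hw
      have c1 : R t * (1 + S t * (U t / (1 - U t))) ≤ K * (a + 2) := by
        apply mul_le_mul (hK t b4) _ _ hK0
        · nlinarith [hS t, hS1 t, hupos t]
        · have := hS t; have := hupos t; positivity
      have c2 : 2 * S t * (U t / (1 - U t) - 1) ≤ 2 * a := by
        nlinarith [hS t, hS1 t]
      have c3 : V t / (1 - V t) * (R t * (1 + S t * (U t / (1 - U t)))
            + 2 * S t * ((U t / (1 - U t)) - 1)) ≤ 1 / (K * (a + 2) + 2 * a) * (K * (a + 2) + 2 * a) :=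
        (mul_le_mul_of_nonneg_left (by linarith) (hqpos t).le).trans
          (mul_le_mul_of_nonneg_right b3.le (by positivity))
      have c4 : 1 / (K * (a + 2) + 2 * a) * (K * (a + 2) + 2 * a) = 1 := by
        apply one_div_mul_cancel; positivity
      linarith
  obtain ⟨T0, hT0⟩ := hmany
  intro t
  exact hforward (min T0 t) (hT0 _ (min_le_left _ _)) t (min_le_right _ _)

lemma V_bracket_pos (a k S R U V : ℝ) (ha : 1 < a) (hS : 0 < S) (hk2 : 2 ≤ k)
    (hR : 1 / (2 * a) + k * S ≤ R) (hU : U ∈ Ioo (0:ℝ) 1) (hV : V ∈ Ioo (0:ℝ) 1)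
    (hw : 0 < U / (1 - U) + V / (1 - V) / 2 - a) :
    0 < (2 * U - 1) * (1 - V + 2 * S * V) + R * ((1 - U + S * U) * V) := by
  have e1 : 0 < 1 - U := by linarith [hU.2]
  have e2 : 0 < 1 - V := by linarith [hV.2]
  have h0 := hV.1
  have h1 := hU.1
  rcases lt_or_ge U (1/2) with h | h
  · refine lt_of_lt_of_le ?_ (B_low a k S R U V ha hS hk2 hR hU.1 h hV.1 hV.2 hw)
    have : 1 / a < 1 := by rw [div_lt_one (by linarith)]; exact ha
    exact mul_pos (mul_pos h1 e2) (by linarith)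
  · refine lt_of_lt_of_le ?_ (B_high a k S R U V ha hS hk2 hR h hU.2 hV.1 hV.2)
    have : 0 < (1 - U) * V / (2 * a) := by positivity
    have : 0 ≤ (2 * U - 1) * (1 - V) := mul_nonneg (by linarith) e2.le
    linarith

set_option maxHeartbeats 1600000 in
lemma V_to_one (a k K T : ℝ) (S R U V : ℝ → ℝ) (ha : 1 < a) (hk2 : 2 ≤ k) (hka : a + 1/2 ≤ k)
    (hS : ∀ t, 0 < S t) (hS1 : ∀ t, S t < 1)
    (hR : ∀ t, 1 / (2 * a) + k * S t ≤ R t) (hK : ∀ t ≥ T, R t ≤ K)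
    (hU : ∀ t : ℝ, U t ∈ Ioo (0:ℝ) 1) (hV : ∀ t : ℝ, V t ∈ Ioo (0:ℝ) 1)
    (hUode : ∀ t : ℝ, HasDerivAt U
      (U t * (1 - U t) * ((a - (a + 1) * U t) * (1 - V t)
        - (1 + S t - R t) * ((1 - U t + S t * U t) * V t))) t)
    (hVode : ∀ t : ℝ, HasDerivAt V
      (V t * (1 - V t) * ((2 * U t - 1) * (1 - V t + 2 * S t * V t)
        + R t * ((1 - U t + S t * U t) * V t))) t)
    (hw : ∀ t, 0 < U t / (1 - U t) + V t / (1 - V t) / 2 - a)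
    (hmono : Monotone V) : Tendsto V atTop (nhds 1) := by
  have hbdd : BddAbove (range V) := ⟨1, by rintro _ ⟨t, rfl⟩; exact (hV t).2.le⟩
  have hlim := tendsto_atTop_ciSup hmono hbdd
  set v := ⨆ t, V t with hv
  have hVv : ∀ t, V t ≤ v := fun t => le_ciSup hbdd t
  have hv1 : v ≤ 1 := ciSup_le fun t => (hV t).2.le
  rcases hv1.eq_or_lt with h | hlt
  · rwa [h] at hlim
  exfalso
  have ha0 : 0 < 1 - 1 / a := by
    have : 1 / a < 1 := by rw [div_lt_one (by linarith)]; exact ha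
    linarith
  have hV0 := (hV T).1
  set V0 := V T with hV0def
  have hVV0 : ∀ t ≥ T, V0 ≤ V t := fun t ht => hmono ht
  -- (i)
  obtain ⟨c, hc, hVc⟩ : ∃ c > 0, ∀ t ≥ T, c * U t ≤
      (V t * (1 - V t) * ((2 * U t - 1) * (1 - V t + 2 * S t * V t)
        + R t * ((1 - U t + S t * U t) * V t))) := by
    set c0 := min (min (1 - v) (V0 / (2 * a))) ((1 - v) * (1 - 1 / a)) with hc0
    have hc0pos : 0 < c0 := by
      refine lt_min (lt_min (by linarith) (by positivity)) (mul_pos (by linarith) ha0)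
    have hc01 : c0 ≤ 1 - v := (min_le_left _ _).trans (min_le_left _ _)
    have hc02 : c0 ≤ V0 / (2 * a) := (min_le_left _ _).trans (min_le_right _ _)
    have hc03 : c0 ≤ (1 - v) * (1 - 1 / a) := min_le_right _ _
    refine ⟨V0 * (1 - v) * c0, by have : 0 < 1 - v := by linarith
                                  positivity, fun t ht => ?_⟩
    have hUt := hU t
    have hVt := hV t
    have hB : c0 * U t ≤ ((2 * U t - 1) * (1 - V t + 2 * S t * V t)
        + R t * ((1 - U t + S t * U t) * V t)) := by
      rcases lt_or_ge (U t) (1/2) with h | h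
      · refine le_trans ?_ (B_low a k (S t) (R t) (U t) (V t) ha (hS t) hk2 (hR t) hUt.1 h
          hVt.1 hVt.2 (hw t))
        have h1 : c0 ≤ (1 - V t) * (1 - 1 / a) :=
          hc03.trans (mul_le_mul_of_nonneg_right (by linarith [hVv t]) ha0.le)
        nlinarith [mul_le_mul_of_nonneg_right h1 hUt.1.le]
      · refine le_trans ?_ (B_high a k (S t) (R t) (U t) (V t) ha (hS t) hk2 (hR t) h hUt.2
          hVt.1 hVt.2)
        have h1 : c0 ≤ 1 - V t := by linarith [hVv t]
        have h2 : c0 ≤ V t / (2 * a) := hc02.trans (by gcongr; exact hVV0 t ht)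
        have h3 := mul_le_mul_of_nonneg_left h1 (by linarith : 0 ≤ 2 * U t - 1)
        have h4 := mul_le_mul_of_nonneg_left h2 (by linarith [hUt.2] : 0 ≤ 1 - U t)
        have h5 : (1 - U t) * (V t / (2 * a)) = (1 - U t) * V t / (2 * a) := by ring
        linarith
    have h6 : V0 * (1 - v) ≤ V t * (1 - V t) :=
      mul_le_mul (hVV0 t ht) (by linarith [hVv t]) (by linarith) hVt.1.le
    calc V0 * (1 - v) * c0 * U t = V0 * (1 - v) * (c0 * U t) := by ring
      _ ≤ _ := mul_le_mul h6 hB (mul_nonneg hc0pos.le hUt.1.le)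
        (mul_nonneg hVt.1.le (by linarith [hVt.2]))
  have hK0 : 0 ≤ K := by
    have h1 := hK T le_rfl
    have h2 := hR T
    have h3 : 0 < 1 / (2 * a) := by positivity
    have h4 : 0 < k * S T := mul_pos (by linarith) (hS T)
    linarith
  -- (ii)
  have hUM : ∀ t ≥ T, (U t * (1 - U t) * ((a - (a + 1) * U t) * (1 - V t)
        - (1 + S t - R t) * ((1 - U t + S t * U t) * V t))) ≤ (a + K) * U t := by
    intro t ht
    have hUt := hU t
    have hVt := hV t
    have hSt := hS t
    have hSt1 := hS1 t
    have hA0 : 0 ≤ 1 - U t + S t * U t := by nlinarith [hUt.1, hUt.2]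
    have hA1 : 1 - U t + S t * U t ≤ 1 := by nlinarith [hUt.1]
    have hH0 : 0 ≤ (1 - U t + S t * U t) * V t := mul_nonneg hA0 hVt.1.le
    have hH1 : (1 - U t + S t * U t) * V t ≤ 1 := by nlinarith [hVt.1, hVt.2]
    have b1 : (a - (a + 1) * U t) * (1 - V t) ≤ a := by
      have := mul_le_mul_of_nonneg_right (by nlinarith [hUt.1] : a - (a + 1) * U t ≤ a)
        (by linarith [hVt.2] : 0 ≤ 1 - V t)
      nlinarith [hVt.1]
    have b2 : - (1 + S t - R t) * ((1 - U t + S t * U t) * V t) ≤ K := by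
      have := mul_le_mul_of_nonneg_right (by linarith [hK t ht] : - (1 + S t - R t) ≤ K) hH0
      nlinarith
    have b3 : ((a - (a + 1) * U t) * (1 - V t)
        - (1 + S t - R t) * ((1 - U t + S t * U t) * V t)) ≤ a + K := by linarith
    have b4 : (1 - U t) * ((a - (a + 1) * U t) * (1 - V t)
        - (1 + S t - R t) * ((1 - U t + S t * U t) * V t)) ≤ a + K := by
      have := mul_le_mul_of_nonneg_left b3 (by linarith [hUt.2] : 0 ≤ 1 - U t)
      nlinarith [hUt.1]
    have := mul_le_mul_of_nonneg_left b4 hUt.1.le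
    linarith
  -- (iii)
  set M := (a + K) / c with hM
  have hMc : M * c = a + K := by rw [hM]; field_simp
  have hM0 : 0 ≤ M := by positivity
  have hdZ := fun t => (hUode t).sub ((hVode t).const_mul M)
  have hanti : AntitoneOn (fun t => U t - M * V t) (Ici T) := by
    apply antitoneOn_of_deriv_nonpos (convex_Ici T)
    · exact fun t _ => (hdZ t).continuousAt.continuousWithinAt
    · exact fun t _ => (hdZ t).differentiableAt.differentiableWithinAt
    · intro t ht
      rw [interior_Ici] at ht
      have ht : T ≤ t := le_of_lt ht
      have h1 := (hdZ t).deriv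
      refine (le_of_eq h1).trans ?_
      have h2 := hUM t ht
      have h3 := mul_le_mul_of_nonneg_left (hVc t ht) hM0
      have h4 : M * (c * U t) = (a + K) * U t := by rw [← hMc]; ring
      linarith
  obtain ⟨z, hz⟩ : ∃ z, Tendsto (fun t => U t - M * V t) atTop (nhds z) := by
    have hanti2 : Antitone (fun t => U (max t T) - M * V (max t T)) := by
      intro s t hst
      exact hanti (mem_Ici.2 (le_max_right _ _)) (mem_Ici.2 (le_max_right _ _))
        (max_le_max_right T hst)
    have hb : BddBelow (range (fun t => U (max t T) - M * V (max t T))) := by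
      refine ⟨-M, ?_⟩
      rintro _ ⟨t, rfl⟩
      have := (hU (max t T)).1
      have := (hV (max t T)).2
      simp only
      nlinarith
    refine ⟨_, (tendsto_atTop_ciInf hanti2 hb).congr' ?_⟩
    filter_upwards [eventually_ge_atTop T] with t ht
    rw [max_eq_left ht]
  have hUlim : Tendsto U atTop (nhds (z + M * v)) := by
    have := hz.add (hlim.const_mul M)
    simpa using this
  set u0 := z + M * v with hu0
  have hu00 : 0 ≤ u0 := ge_of_tendsto' hUlim fun t => (hU t).1.le
  have hU0 : u0 = 0 := by
    by_contra hne
    have hp : 0 < u0 := lt_of_le_of_ne hu00 (Ne.symm hne)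
    obtain ⟨T1, hT1⟩ := eventually_atTop.1 (hUlim.eventually (lt_mem_nhds (half_lt_self hp)))
    refine unbounded_of_deriv V _ (max T T1) (c * (u0 / 2)) 1 (by positivity) hVode ?_
      (fun t _ => (hV t).2.le)
    intro t ht
    exact (mul_le_mul_of_nonneg_left (hT1 t ((le_max_right _ _).trans ht)).le hc.le).trans
      (hVc t ((le_max_left _ _).trans ht))
  rw [hU0] at hUlim
  -- (iv)
  have hu : Tendsto (fun t => U t / (1 - U t)) atTop (nhds 0) := by
    exact tendsto_odds U _ 0 0 (by norm_num) (by norm_num) hUlim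
  set q0 := V0 / (1 - V0) with hq0
  have hq0pos : 0 < q0 := div_pos hV0 (by linarith [(hV T).2])
  have hqq : ∀ t ≥ T, q0 ≤ V t / (1 - V t) := by
    intro t ht
    apply div_le_div₀ (hV t).1.le (hVV0 t ht) (by linarith [(hV t).2]) (by linarith [hVV0 t ht])
  have hqv : ∀ t, V t / (1 - V t) ≤ v / (1 - v) := by
    intro t
    apply div_le_div₀ (by linarith [(hV t).1, hVv t]) (hVv t) (by linarith) (by linarith [hVv t])
  have hev : ∀ᶠ t in atTop, U t / (1 - U t) < q0 / (4 * a) ∧ U t / (1 - U t) < 1 ∧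
      U t < 1/2 ∧ T ≤ t :=
    (hu.eventually (gt_mem_nhds (by positivity))).and ((hu.eventually (gt_mem_nhds (by norm_num))).and
      ((hUlim.eventually (gt_mem_nhds (by norm_num))).and (eventually_ge_atTop T)))
  obtain ⟨T2, hT2⟩ := eventually_atTop.1 hev
  have hd := fun t => w_deriv a (S t) (R t) U V t (hU t).2 (hV t).2 (hUode t) (hVode t)
  set W := fun t => U t / (1 - U t) + V t / (1 - V t) / 2 - a with hW
  set W' := fun t => ((1 - U t) * (1 - V t) * (
        (U t / (1 - U t) + V t / (1 - V t) / 2 - a) *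
          (-(U t / (1 - U t)) + V t / (1 - V t) * (R t * (1 + S t * (U t / (1 - U t)))
            + 2 * S t * ((U t / (1 - U t)) - 1)))
        + V t / (1 - V t) * (-(1/2) + a * R t * (1 + S t * (U t / (1 - U t)))
          - S t * (U t / (1 - U t))
          - S t * (U t / (1 - U t))^2 - (S t)^2 * (U t / (1 - U t))^2
          + 2 * S t * ((U t / (1 - U t)) - 1) * (a - (U t / (1 - U t)))))) with hW'
  have hd' : ∀ t, HasDerivAt W (W' t) t := hd
  have hlow : ∀ t ≥ T2, (1/2 * (1 - v)) * (W t * (q0 / (4 * a))) ≤ W' t := by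
    intro t ht
    obtain ⟨b1, b2, b3, b4⟩ := hT2 t ht
    have hut : 0 < U t / (1 - U t) := div_pos (hU t).1 (by linarith [(hU t).2])
    have hqt : 0 < V t / (1 - V t) := div_pos (hV t).1 (by linarith [(hV t).2])
    have hg := mul_pos hqt (G_pos a k (S t) (R t) (U t / (1 - U t)) ha (hS t) hk2 hka (hR t) hut
      (by linarith))
    have hSt := hS t
    have e1 : 1 / (2 * a) ≤ R t * (1 + S t * (U t / (1 - U t)))
            + 2 * S t * ((U t / (1 - U t)) - 1) := by
      have x1 : 0 < 1 / (2 * a) := by positivity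
      have x2 : 1 / (2 * a) + 2 * S t ≤ R t := by nlinarith [hR t]
      have x3 : 0 ≤ R t * (S t * (U t / (1 - U t))) := by
        have : 0 ≤ R t := by linarith
        positivity
      have x4 : 0 ≤ S t * (U t / (1 - U t)) := by positivity
      nlinarith
    have e2 : q0 * (1 / (2 * a)) ≤ V t / (1 - V t) * (R t * (1 + S t * (U t / (1 - U t)))
            + 2 * S t * ((U t / (1 - U t)) - 1)) :=
      mul_le_mul (hqq t b4) e1 (by positivity) hqt.le
    have e3 : q0 * (1 / (2 * a)) = q0 / (4 * a) + q0 / (4 * a) := by field_simp; norm_num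
    have e4 : q0 / (4 * a) ≤ -(U t / (1 - U t)) + V t / (1 - V t) *
        (R t * (1 + S t * (U t / (1 - U t))) + 2 * S t * ((U t / (1 - U t)) - 1)) := by linarith
    have e5 := mul_le_mul_of_nonneg_left e4 (hw t).le
    have hwt := hw t
    apply mul_le_mul
    · apply mul_le_mul (by linarith) (by linarith [hVv t]) (by linarith) (by linarith)
    · exact e5.trans (by linarith)
    · exact mul_nonneg hwt.le (div_nonneg hq0pos.le (by linarith))
    · exact mul_nonneg (by linarith) (by linarith [(hV t).2])
  have hmul : 0 < (1/2 * (1 - v)) * (q0 / (4 * a)) := by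
    have : 0 < 1 - v := by linarith
    positivity
  have hWmono : MonotoneOn W (Ici T2) := by
    apply monotoneOn_of_deriv_nonneg (convex_Ici T2)
    · exact fun t _ => (hd' t).continuousAt.continuousWithinAt
    · exact fun t _ => (hd' t).differentiableAt.differentiableWithinAt
    · intro t ht
      rw [interior_Ici] at ht
      rw [(hd' t).deriv]
      have h1 := hlow t (le_of_lt ht)
      have h2 : 0 < W t := hw t
      nlinarith [mul_pos hmul h2]
  refine unbounded_of_deriv W W' T2 ((1/2 * (1 - v)) * (q0 / (4 * a)) * W T2)
    (1 + v / (1 - v) / 2) (mul_pos hmul (hw T2)) hd' ?_ ?_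
  · intro t ht
    have h1 := hWmono (mem_Ici.2 le_rfl) (mem_Ici.2 ht) ht
    have h2 := mul_le_mul_of_nonneg_left h1 hmul.le
    linarith [hlow t ht]
  · intro t ht
    have h1 := (hT2 t ht).2.1
    have h2 := hqv t
    simp only [hW]
    linarith

/-- With `k = 3+2l+1/2` if `l ≥ -3/4`, `k = 2` otherwise: if `σ' ≥ 1/(2(3+2l)) + kσ` on `(0,η̌]`, then every interior orbit whose α-limit is a point `(1,0,Ω₀)` or `((3+2l)/(4+2l),0,Ω₀)` with `Ω₀ ≤ Ω̌` satisfies `Ω → 0` and `V → 1` as `λ → +∞`. -/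
theorem stmt4
    (l : ℝ) (hl : -1 < l)
    (σ σ' : ℝ → ℝ)
    (hσderiv : ∀ η : ℝ, 0 < η → HasDerivAt σ (σ' η) η)
    (hσ'cont : ContinuousOn σ' (Ioi 0))
    (hσrange : ∀ η : ℝ, 0 < η → σ η ∈ Ioo 0 (1 / (3 + 2 * l)))
    (hσ0 : Tendsto σ (nhdsWithin 0 (Ioi 0)) (nhds 0))
    (k₁ k₂ : ℝ) (hk₁ : 0 < k₁) (hk₁₂ : k₁ < k₂)
    (hσ'near : ∃ η₀ > (0:ℝ), ∀ η ∈ Ioo (0:ℝ) η₀, σ' η ∈ Ioo k₁ k₂)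
    (ω ω' : ℝ → ℝ)
    (hωsmooth : ContDiffOn ℝ (⊤ : ℕ∞) ω (Ioi 0))
    (hωderiv : ∀ η : ℝ, 0 < η → HasDerivAt ω (ω' η) η)
    (hωpos : ∀ η : ℝ, 0 < η → 0 < ω η)
    (hωmono : StrictMonoOn ω (Ioi 0))
    (hω0 : Tendsto ω (nhdsWithin 0 (Ioi 0)) (nhds 0))
    (F : ℝ → ℝ) (hFdef : ∀ η : ℝ, 0 < η → F η = σ η * (ω' η / ω η))
    (Flo Fhi : ℝ) (hFlo : 0 < Flo)
    (hFbounds : ∀ η : ℝ, 0 < η → F η ∈ Icc Flo Fhi)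
    (U V E Ω : ℝ → ℝ)
    (hΩdef : ∀ t : ℝ, Ω t = ω (E t) / (1 + ω (E t)))
    (hU : ∀ t : ℝ, U t ∈ Ioo (0:ℝ) 1) (hV : ∀ t : ℝ, V t ∈ Ioo (0:ℝ) 1)
    (hE : ∀ t : ℝ, 0 < E t) (hEcont : Continuous E)
    (hUode : ∀ t : ℝ, HasDerivAt U
      (U t * (1 - U t) * ((3 + 2 * l - (4 + 2 * l) * U t) * (1 - V t)
        - (1 + σ (E t) - σ' (E t)) * ((1 - U t + σ (E t) * U t) * V t))) t)
    (hVode : ∀ t : ℝ, HasDerivAt V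
      (V t * (1 - V t) * ((2 * U t - 1) * (1 - V t + 2 * σ (E t) * V t)
        + σ' (E t) * ((1 - U t + σ (E t) * U t) * V t))) t)
    (hΩode : ∀ t : ℝ, HasDerivAt Ω
      (-(Ω t * (1 - Ω t) * F (E t) * ((1 - U t + σ (E t) * U t) * V t))) t)
    (k : ℝ) (hk : k = if -(3/4) ≤ l then 3 + 2 * l + 1 / 2 else 2)
    (ηch : ℝ) (hηch : 0 < ηch)
    (hmain : ∀ η : ℝ, 0 < η → η ≤ ηch →
      1 / (2 * (3 + 2 * l)) + k * σ η ≤ σ' η)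
    (Ω₀ : ℝ) (hΩ₀ : Ω₀ ≤ ω ηch / (1 + ω ηch))
    (halpha : Tendsto (fun t => (U t, V t, Ω t)) atBot (nhds ((1:ℝ), (0:ℝ), Ω₀)) ∨
      Tendsto (fun t => (U t, V t, Ω t)) atBot
        (nhds ((3 + 2 * l) / (4 + 2 * l), (0:ℝ), Ω₀))) :
    Tendsto Ω atTop (nhds 0) ∧ Tendsto V atTop (nhds 1) := by
  have ha : 1 < 3 + 2 * l := by linarith
  set a := 3 + 2 * l with hadef
  have ha1 : 4 + 2 * l = a + 1 := by rw [hadef]; ring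
  have hka : 2 ≤ k ∧ a + 1/2 ≤ k := by
    rw [hk]
    split_ifs with h
    · constructor <;> linarith
    · push Not at h
      constructor <;> linarith
  obtain ⟨hk2, hka⟩ := hka
  have hS : ∀ t, 0 < σ (E t) := fun t => (hσrange _ (hE t)).1
  have hS1 : ∀ t, σ (E t) < 1 := fun t =>
    (hσrange _ (hE t)).2.trans (by rw [div_lt_one (by linarith)]; exact ha)
  have hωE : ∀ t, 0 < ω (E t) := fun t => hωpos _ (hE t)
  have hΩ0 : ∀ t, 0 < Ω t := fun t => by
    rw [hΩdef]; have := hωE t; positivity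
  have hΩ1 : ∀ t, Ω t < 1 := fun t => by
    rw [hΩdef, div_lt_one (by linarith [hωE t])]; linarith
  have hA : ∀ t, 0 < 1 - U t + σ (E t) * U t := fun t => by
    have := mul_pos (hS t) (hU t).1
    linarith [(hU t).2]
  have hΩanti : StrictAnti Ω := by
    apply strictAnti_of_deriv_neg
    intro t
    rw [(hΩode t).deriv]
    have h1 := hΩ0 t
    have h2 : 0 < 1 - Ω t := by linarith [hΩ1 t]
    have h3 : 0 < F (E t) := hFlo.trans_le (hFbounds _ (hE t)).1
    have h4 := hA t
    have h5 := (hV t).1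
    have : 0 < Ω t * (1 - Ω t) * F (E t) * ((1 - U t + σ (E t) * U t) * V t) := by positivity
    linarith
  -- comparison of `Ω` values and `E` values
  have hcmp : ∀ η, 0 < η → ∀ t, Ω t < ω η / (1 + ω η) → E t < η := by
    intro η hη t h
    rw [hΩdef, div_lt_div_iff₀ (by linarith [hωE t]) (by linarith [hωpos η hη])] at h
    by_contra hcon
    push Not at hcon
    have := hωmono.monotoneOn (mem_Ioi.2 hη) (mem_Ioi.2 (hE t)) hcon
    nlinarith
  have hUlim : Tendsto U atBot (nhds 1) ∨ Tendsto U atBot (nhds (a / (a + 1))) := by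
    rw [ha1] at halpha
    rcases halpha with h | h
    · exact Or.inl ((continuous_fst.tendsto _).comp h)
    · exact Or.inr ((continuous_fst.tendsto _).comp h)
  have hVlim : Tendsto V atBot (nhds 0) := by
    rcases halpha with h | h
    · exact ((continuous_fst.comp continuous_snd).tendsto _).comp h
    · exact ((continuous_fst.comp continuous_snd).tendsto _).comp h
  have hΩlim : Tendsto Ω atBot (nhds Ω₀) := by
    rcases halpha with h | h
    · exact ((continuous_snd.comp continuous_snd).tendsto _).comp h
    · exact ((continuous_snd.comp continuous_snd).tendsto _).comp h
  have hEch : ∀ t, E t < ηch := by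
    intro t
    apply hcmp ηch hηch
    have h1 : Ω (t - 1) ≤ Ω₀ := hΩanti.antitone.ge_of_tendsto hΩlim (t - 1)
    have h2 : Ω t < Ω (t - 1) := hΩanti (by linarith)
    linarith
  have hR : ∀ t, 1 / (2 * a) + k * σ (E t) ≤ σ' (E t) := fun t => hmain _ (hE t) (hEch t).le
  have hEanti : Antitone E := by
    intro s t hst
    rcases hst.eq_or_lt with rfl | h
    · exact le_rfl
    refine (hcmp (E s) (hE s) t ?_).le
    rw [← hΩdef]
    exact hΩanti h
  obtain ⟨K, hK⟩ : ∃ K, ∀ t ≤ 0, σ' (E t) ≤ K := by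
    obtain ⟨K, hK⟩ := (isCompact_Icc (a := E 0) (b := ηch)).bddAbove_image
      (hσ'cont.mono fun x hx => mem_Ioi.2 ((hE 0).trans_le hx.1))
    exact ⟨K, fun t ht => hK ⟨E t, ⟨hEanti ht, (hEch t).le⟩, rfl⟩⟩
  rw [ha1] at hUode
  have hw := w_pos a k K (fun t => σ (E t)) (fun t => σ' (E t)) U V ha hk2 hka hS hS1 hR hK hU hV
    hUode hVode hVlim hUlim
  have hVmono : Monotone V := by
    apply monotone_of_deriv_nonneg (fun t => (hVode t).differentiableAt)
    intro t
    rw [(hVode t).deriv]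
    have := V_bracket_pos a k (σ (E t)) (σ' (E t)) (U t) (V t) ha (hS t) hk2 (hR t) (hU t) (hV t)
      (hw t)
    exact mul_nonneg (mul_nonneg (hV t).1.le (by linarith [(hV t).2])) this.le
  have hbdd : BddBelow (range Ω) := ⟨0, by rintro _ ⟨t, rfl⟩; exact (hΩ0 t).le⟩
  have hlim := tendsto_atTop_ciInf hΩanti.antitone hbdd
  set L := ⨅ t, Ω t with hL
  have hΩL : ∀ t, L ≤ Ω t := fun t => ciInf_le hbdd t
  have hL0 : 0 ≤ L := le_ciInf fun t => (hΩ0 t).le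
  have hLz : L = 0 := by
    by_contra hne
    have hLp : 0 < L := lt_of_le_of_ne hL0 (Ne.symm hne)
    -- lower bound for `E`
    obtain ⟨δ, hδ, hδE⟩ : ∃ δ > 0, ∀ t, δ ≤ E t := by
      have h1 := hω0.eventually (gt_mem_nhds hLp)
      obtain ⟨δ, hδ, hsub⟩ := mem_nhdsGT_iff_exists_Ioo_subset.1 h1
      refine ⟨δ, hδ, fun t => ?_⟩
      by_contra hcon
      push Not at hcon
      have h2 : ω (E t) < L := hsub ⟨hE t, hcon⟩
      have h3 := hΩL t
      rw [hΩdef, le_div_iff₀ (by linarith [hωE t])] at h3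
      nlinarith [hωE t]
    obtain ⟨x, hx, hxmin⟩ := (isCompact_Icc (a := δ) (b := ηch)).exists_isMinOn
      ⟨E 0, hδE 0, (hEch 0).le⟩
      (fun y hy => (hσderiv y (hδ.trans_le hy.1)).continuousAt.continuousWithinAt)
    have hx0 : 0 < x := hδ.trans_le hx.1
    have hs0 : 0 < σ x := (hσrange x hx0).1
    have hsE : ∀ t, σ x ≤ σ (E t) := fun t => hxmin ⟨hδE t, (hEch t).le⟩
    have hV0 := (hV 0).1
    have hO0 : 0 < 1 - Ω 0 := by linarith [hΩ1 0]
    refine unbounded_of_deriv (fun t => - Ω t) _ 0 (L * (1 - Ω 0) * Flo * (σ x * V 0)) 0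
      (by positivity) (fun t => (hΩode t).neg) ?_ (fun t _ => by linarith [hΩ0 t])
    intro t ht
    rw [neg_neg]
    have hUt := hU t
    have hVt := hVmono ht
    have e1 : σ x ≤ 1 - U t + σ (E t) * U t := by
      have := hsE t
      have := hS1 t
      nlinarith [hUt.1, hUt.2]
    have e2 : 1 - Ω 0 ≤ 1 - Ω t := by linarith [hΩanti.antitone ht]
    have e3 := hΩL t
    have e4 := (hFbounds _ (hE t)).1
    have e5 := hΩ0 t
    have e6 : 0 ≤ 1 - Ω t := by linarith
    have e7 := hA t
    have e8 : 0 ≤ F (E t) := by linarith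
    gcongr
  rw [hLz] at hlim
  refine ⟨hlim, ?_⟩
  obtain ⟨η₀, hη₀, hnear⟩ := hσ'near
  have hpos : 0 < ω η₀ / (1 + ω η₀) := by have := hωpos η₀ hη₀; positivity
  obtain ⟨T, hT⟩ := eventually_atTop.1 (hlim.eventually (gt_mem_nhds hpos))
  exact V_to_one a k k₂ T (fun t => σ (E t)) (fun t => σ' (E t)) U V ha hk2 hka hS hS1 hR
    (fun t ht => (hnear _ ⟨hE t, hcmp η₀ hη₀ t (hT t ht)⟩).2.le) hU hV hUode hVode hw hVmono
end
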